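/- arXiv:1410.7818 — 8 statements merged into one kernel-verified Lean document; each statement's English description precedes it below -/
import Mathlib

section
/- For every integer p ≥ 1 and every integer k ≥ 0, the formal power series Σ_{n≥0} g_{k,p}(n) x^n is rational: there exist polynomials P(x) and Q(x) with integer coefficients such that Q(0) = 1 and Q(x) · Σ_{n≥0} g_{k,p}(n) x^n = P(x) as formal power series. -/
/-!
Transfer-matrix method. A word of length at least two is read through its pairs of consecutive
letters; a condition on triples of consecutive letters says which pair may follow which, so it is
recorded by a `0`-`1` matrix `M` indexed by pairs, and the number of admissible words of length
`n + 2` is the sum of the entries of `M ^ n`. Since `∑ Mⁿ xⁿ = (1 - x M)⁻¹`, Cramer's rule makes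
every entry a rational function with denominator `det (1 - x M)`, whose constant coefficient is `1`.
-/

/-- A word `f : [n] → [p]` (modeled 0-indexed as `f : Fin n → Fin p`) is `k`-convex if
`f(i-1) + f(i+1) - 2 f(i) ≤ k` for all interior positions. -/
def IsKConvex (k : ℕ) {n p : ℕ} (f : Fin n → Fin p) : Prop :=
  ∀ i j l : Fin n, (i : ℕ) + 1 = (j : ℕ) → (j : ℕ) + 1 = (l : ℕ) →
    ((f i : ℕ) : ℤ) + ((f l : ℕ) : ℤ) - 2 * ((f j : ℕ) : ℤ) ≤ (k : ℤ)

/-- `g_{k,p}(n)`: the number of `k`-convex words of length `n` on the alphabet `[p]`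
(with `g_{k,p}(0) = 1` counting the empty word). -/
noncomputable def gkp (k p n : ℕ) : ℕ := Nat.card {f : Fin n → Fin p // IsKConvex k f}

section RationalPowerSeries

open Polynomial
open scoped PowerSeries

variable {R : Type*} [CommRing R]

variable (R) in
/-- The algebra of rational power series, i.e. those that become polynomial after multiplication by
a polynomial. Over a ring, the denominator is normalized to have constant coefficient `1`. -/
def rationalPowerSeries : Subalgebra R[X] R⟦X⟧ where
  carrier := {F | ∃ P Q : R[X], Q.coeff 0 = 1 ∧ (Q : R⟦X⟧) * F = P}
  mul_mem' := by
    rintro F G ⟨P, Q, hQ, hF⟩ ⟨P', Q', hQ', hG⟩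
    refine ⟨P * P', Q * Q', by simp [mul_coeff_zero, hQ, hQ'], ?_⟩
    rw [coe_mul, coe_mul, ← hF, ← hG]
    ring
  add_mem' := by
    rintro F G ⟨P, Q, hQ, hF⟩ ⟨P', Q', hQ', hG⟩
    refine ⟨Q' * P + Q * P', Q * Q', by simp [mul_coeff_zero, hQ, hQ'], ?_⟩
    rw [coe_add, coe_mul, coe_mul, coe_mul, ← hF, ← hG]
    ring
  algebraMap_mem' P := ⟨P, 1, coeff_one_zero, by simp [PowerSeries.algebraMap_apply']⟩

theorem mem_rationalPowerSeries {F : R⟦X⟧} :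
    F ∈ rationalPowerSeries R ↔ ∃ P Q : R[X], Q.coeff 0 = 1 ∧ (Q : R⟦X⟧) * F = P :=
  Iff.rfl

theorem coe_mem_rationalPowerSeries (P : R[X]) : (P : R⟦X⟧) ∈ rationalPowerSeries R := by
  simpa [PowerSeries.algebraMap_apply'] using (rationalPowerSeries R).algebraMap_mem P

theorem mk_mem_rationalPowerSeries_of_shift {a : ℕ → R} (d : ℕ)
    (h : PowerSeries.mk (fun n => a (n + d)) ∈ rationalPowerSeries R) :
    PowerSeries.mk a ∈ rationalPowerSeries R := by
  rw [(PowerSeries.mk a).eq_X_pow_mul_shift_add_trunc d, ← coe_X, ← coe_pow]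
  simp only [PowerSeries.coeff_mk]
  exact add_mem (mul_mem (coe_mem_rationalPowerSeries _) h) (coe_mem_rationalPowerSeries _)

end RationalPowerSeries

section MatrixPowers

open Polynomial Matrix
open scoped PowerSeries

variable {R ι : Type*} [CommRing R] [Fintype ι] [DecidableEq ι]

/-- The generating function `∑ Mⁿ Xⁿ` of the powers of `M`, as a matrix of power series. -/
def powGenFun (M : Matrix ι ι R) : Matrix ι ι R⟦X⟧ :=
  Matrix.of fun i j => PowerSeries.mk fun n => (M ^ n) i j

theorem one_sub_X_smul_mul_powGenFun (M : Matrix ι ι R) :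
    (1 - (X : R[X]) • M.map C).map coeToPowerSeries.ringHom * powGenFun M = 1 := by
  have map_eq : (1 - (X : R[X]) • M.map C).map coeToPowerSeries.ringHom =
      1 - (PowerSeries.X : R⟦X⟧) • M.map PowerSeries.C := by
    ext1 i j
    simp [Matrix.one_apply, apply_ite, PowerSeries.commute_X (PowerSeries.C (M i j)) |>.eq]
  rw [map_eq, sub_mul, one_mul, smul_mul]
  ext i j n
  cases n with
  | zero => by_cases hij : i = j <;> simp [powGenFun, Matrix.one_apply, hij]
  | succ n =>
    simp [powGenFun, Matrix.one_apply, apply_ite, Matrix.mul_apply, pow_succ',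
      PowerSeries.coeff_succ_X_mul, PowerSeries.coeff_one]

theorem charpolyRev_smul_powGenFun (M : Matrix ι ι R) :
    (M.charpolyRev : R⟦X⟧) • powGenFun M =
      (1 - (X : R[X]) • M.map C).adjugate.map coeToPowerSeries.ringHom := by
  let φ : R[X] →+* R⟦X⟧ := coeToPowerSeries.ringHom
  let A : Matrix ι ι R[X] := 1 - (X : R[X]) • M.map C
  have map_det : (M.charpolyRev : R⟦X⟧) = (A.map φ).det := φ.map_det A
  have map_adjugate : A.adjugate.map φ = (A.map φ).adjugate := φ.map_adjugate A
  calc (M.charpolyRev : R⟦X⟧) • powGenFun M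
      = (A.map φ).adjugate * (A.map φ * powGenFun M) := by
        rw [← Matrix.mul_assoc, adjugate_mul, smul_mul, Matrix.one_mul, map_det]
    _ = A.adjugate.map φ := by
        rw [one_sub_X_smul_mul_powGenFun, Matrix.mul_one, map_adjugate]

theorem mk_pow_apply_mem_rationalPowerSeries (M : Matrix ι ι R) (i j : ι) :
    PowerSeries.mk (fun n => (M ^ n) i j) ∈ rationalPowerSeries R := by
  refine ⟨(1 - (X : R[X]) • M.map C).adjugate i j, M.charpolyRev, ?_,
    congr_fun₂ (charpolyRev_smul_powGenFun M) i j⟩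
  rw [coeff_zero_eq_eval_zero, eval_charpolyRev]

end MatrixPowers

theorem card_subtype_eq_sum_cons {α : Type*} [Fintype α] {n : ℕ}
    (P : (Fin (n + 1) → α) → Prop) :
    Nat.card {f // P f} = ∑ a, Nat.card {f : Fin n → α // P (Fin.cons a f)} := by
  rw [← Nat.card_sigma]
  exact Nat.card_congr <|
    ((Fin.consEquiv fun _ => α).subtypeEquivOfSubtype (p := P)).symm.trans
      (Equiv.subtypeProdEquivSigmaSubtype fun a f => P (Fin.cons a f))

section TripleChain

variable {α : Type*} (r : α → α → α → Prop)

/-- A word is a triple chain for the ternary relation `r` if `r` holds on any three consecutive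
letters: the ternary analogue of `List.IsChain`. Consecutive positions are given by equations
between indices, as in `IsKConvex`. -/
def IsTripleChain {n : ℕ} (f : Fin n → α) : Prop :=
  ∀ i j l : Fin n, (i : ℕ) + 1 = (j : ℕ) → (j : ℕ) + 1 = (l : ℕ) → r (f i) (f j) (f l)

variable {r}

theorem isTripleChain_of_le_two {n : ℕ} (hn : n ≤ 2) (f : Fin n → α) : IsTripleChain r f := by
  intro i j l hij hjl
  omega

theorem isTripleChain_cons_iff {n : ℕ} {a : α} {f : Fin (n + 2) → α} :
    IsTripleChain r (Fin.cons a f : Fin (n + 3) → α) ↔ r a (f 0) (f 1) ∧ IsTripleChain r f := by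
  constructor
  · intro h
    refine ⟨h 0 1 2 rfl rfl, fun i j l hij hjl => ?_⟩
    simpa only [Fin.cons_succ] using h i.succ j.succ l.succ (by simp [hij]) (by simp [hjl])
  · rintro ⟨head, tail⟩ i j l hij hjl
    cases j using Fin.cases with
    | zero => simp at hij
    | succ j =>
      cases l using Fin.cases with
      | zero => simp at hjl
      | succ l =>
        cases i using Fin.cases with
        | zero =>
          obtain rfl : j = 0 := Fin.ext (by simpa using hij.symm)
          obtain rfl : l = 1 := Fin.ext (by simpa using hjl.symm)
          exact head
        | succ i => exact tail i j l (by simpa using hij) (by simpa using hjl)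

variable (r) in
/-- The number of ways to extend the pair of letters `s` to a triple chain by appending `n` further
letters. -/
noncomputable def tripleChainCount (n : ℕ) (s : α × α) : ℕ :=
  Nat.card {f : Fin n → α // IsTripleChain r (Fin.cons s.1 (Fin.cons s.2 f : Fin (n + 1) → α))}

theorem tripleChainCount_zero (s : α × α) : tripleChainCount r 0 s = 1 := by
  simp [tripleChainCount, isTripleChain_of_le_two]

variable (r) in
open Classical in
/-- The transfer matrix of `r` on pairs of letters: its entry at `((a, b), (b', c))` is `1` if
`b = b'` and `r a b c`, and `0` otherwise. -/
noncomputable def tripleTransferMatrix (R : Type*) [Zero R] [One R] : Matrix (α × α) (α × α) R :=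
  Matrix.of fun s t => if s.2 = t.1 ∧ r s.1 s.2 t.2 then 1 else 0

section Fintype

variable [Fintype α]

theorem card_isTripleChain_eq_sum_tripleChainCount (n : ℕ) :
    Nat.card {f : Fin (n + 2) → α // IsTripleChain r f} = ∑ s, tripleChainCount r n s := by
  rw [card_subtype_eq_sum_cons, Fintype.sum_prod_type]
  exact Finset.sum_congr rfl fun a _ => card_subtype_eq_sum_cons _

theorem tripleChainCount_succ [∀ a b, DecidablePred (r a b)] (n : ℕ) (a b : α) :
    tripleChainCount r (n + 1) (a, b) =
      ∑ c, if r a b c then tripleChainCount r n (b, c) else 0 := by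
  rw [tripleChainCount, card_subtype_eq_sum_cons]
  refine Finset.sum_congr rfl fun c _ => ?_
  split_ifs with h <;> simp [tripleChainCount, isTripleChain_cons_iff, h]

theorem natCast_tripleChainCount [DecidableEq α] {R : Type*} [Semiring R] (n : ℕ) (s : α × α) :
    (tripleChainCount r n s : R) = ∑ t, (tripleTransferMatrix r R ^ n) s t := by
  classical
  induction n generalizing s with
  | zero => simp [tripleChainCount_zero, Matrix.one_apply]
  | succ n ih =>
    obtain ⟨a, b⟩ := s
    calc (tripleChainCount r (n + 1) (a, b) : R)
        = ∑ c, if r a b c then ∑ t, (tripleTransferMatrix r R ^ n) (b, c) t else 0 := by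
          simp [tripleChainCount_succ, ih]
      _ = ∑ s', tripleTransferMatrix r R (a, b) s' * ∑ t, (tripleTransferMatrix r R ^ n) s' t := by
          simp [tripleTransferMatrix, Fintype.sum_prod_type, ite_and]
      _ = ∑ t, (tripleTransferMatrix r R ^ (n + 1)) (a, b) t := by
          simp_rw [pow_succ', Matrix.mul_apply, Finset.mul_sum]
          exact Finset.sum_comm

end Fintype

theorem mk_card_isTripleChain_mem_rationalPowerSeries {α : Type*} [Finite α]
    (r : α → α → α → Prop) (R : Type*) [CommRing R] :
    PowerSeries.mk (fun n => (Nat.card {f : Fin n → α // IsTripleChain r f} : R)) ∈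
      rationalPowerSeries R := by
  classical
  cases nonempty_fintype α
  have shift_eq_sum : PowerSeries.mk
      (fun n => (Nat.card {f : Fin (n + 2) → α // IsTripleChain r f} : R)) =
        ∑ s, ∑ t, PowerSeries.mk fun n => (tripleTransferMatrix r R ^ n) s t := by
    ext n
    simp only [card_isTripleChain_eq_sum_tripleChainCount, Nat.cast_sum, natCast_tripleChainCount,
      PowerSeries.coeff_mk, map_sum]
  refine mk_mem_rationalPowerSeries_of_shift 2 ?_
  rw [shift_eq_sum]
  exact sum_mem fun s _ => sum_mem fun t _ => mk_pow_apply_mem_rationalPowerSeries _ s t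

end TripleChain

theorem isKConvex_iff_isTripleChain {k n p : ℕ} {f : Fin n → Fin p} :
    IsKConvex k f ↔
      IsTripleChain (fun a b c : Fin p => ((a : ℕ) : ℤ) + (c : ℕ) - 2 * (b : ℕ) ≤ k) f :=
  Iff.rfl

/-- for every `p ≥ 1` and `k ≥ 0`, the generating function
`Σ_{n≥0} g_{k,p}(n) xⁿ` is rational: there are integer polynomials `P, Q` with
`Q(0) = 1` and `Q(x) · Σ g_{k,p}(n) xⁿ = P(x)` as formal power series. -/
theorem convex_words_gen_fun_rational (p k : ℕ) (hp : 1 ≤ p) :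
    ∃ P Q : Polynomial ℤ, Q.coeff 0 = 1 ∧
      (Q : PowerSeries ℤ) * PowerSeries.mk (fun n => (gkp k p n : ℤ))
        = (P : PowerSeries ℤ) := by
  refine mem_rationalPowerSeries.mp ?_
  simp only [gkp, isKConvex_iff_isTripleChain]
  exact mk_card_isTripleChain_mem_rationalPowerSeries _ ℤ
end

section
/- For every integer p ≥ 1 and every integer n > 2(p−1), the number of 0-convex words of length n on the alphabet [p] equals Σ_{m=1}^{p} ( Σ_{j=0}^{m−1} a(j) )², where a(j) is the number of integer partitions of j (with a(0) = 1). -/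
/-!
A `0`-convex word is a discrete concave sequence. Wherever it decreases it keeps decreasing, so
with values at most `N < n / 2` it rises weakly up to position `N`, is constant up to position
`n - 1 - N`, and then falls weakly. Its shortfall from the peak value `m` is therefore the sum of a
convex sequence vanishing from position `m` on and of the mirror image of another one. A convex
sequence that is eventually zero is a sum of hinges `i ↦ x - i` (truncated at zero) in exactly one
way: the multiplicity of the hinge at `x` is the second difference there. So it is the same as a
multiset of positive integers, whose sum is the initial value of the sequence, and the words with
peak `m` correspond to the pairs of partitions of integers `j ≤ m`.
-/

section Excess

/-- The total excess over `i` of the elements of `s`, i.e. the sum of the hinges `i ↦ x - i`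
(truncated at zero) over `x ∈ s`. It encodes a multiset of positive integers as a convex sequence
that is eventually zero. -/
def excess (s : Multiset ℕ) (i : ℕ) : ℕ := (s.map (· - i)).sum

theorem excess_zero_right (s : Multiset ℕ) : excess s 0 = s.sum := by simp [excess]

theorem excess_le_sum (s : Multiset ℕ) (i : ℕ) : excess s i ≤ s.sum := by
  simpa [excess] using Multiset.sum_map_le_sum_map (· - i) id fun x (_ : x ∈ s) => Nat.sub_le x i

theorem excess_eq_zero_of_sum_le {s : Multiset ℕ} {i : ℕ} (h : s.sum ≤ i) : excess s i = 0 := by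
  refine Multiset.sum_eq_zero fun y hy => ?_
  obtain ⟨x, hx, rfl⟩ := Multiset.mem_map.1 hy
  exact Nat.sub_eq_zero_of_le ((Multiset.le_sum_of_mem hx).trans h)

theorem excess_add_excess (s : Multiset ℕ) (i : ℕ) :
    excess s i + excess s (i + 2) = 2 * excess s (i + 1) + s.count (i + 1) := by
  induction s using Multiset.induction_on with
  | empty => simp [excess]
  | cons x s ih =>
    simp only [excess, Multiset.map_cons, Multiset.sum_cons, Multiset.count_cons] at ih ⊢
    split_ifs <;> omega

theorem eq_of_excess_eq {s t : Multiset ℕ} (hs : 0 ∉ s) (ht : 0 ∉ t)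
    (h : excess s = excess t) : s = t := by
  ext x
  cases x with
  | zero => rw [Multiset.count_eq_zero_of_notMem hs, Multiset.count_eq_zero_of_notMem ht]
  | succ i =>
    have hsi := excess_add_excess s i
    rw [h, excess_add_excess t i] at hsi
    omega

-- The second differences are compared with terms moved across, to avoid truncated subtraction.
theorem eq_of_second_difference_eq {u w : ℕ → ℕ} {N : ℕ} (hu : ∀ i, N ≤ i → u i = 0)
    (hw : ∀ i, N ≤ i → w i = 0)
    (h : ∀ i, u i + u (i + 2) + 2 * w (i + 1) = w i + w (i + 2) + 2 * u (i + 1)) : u = w := by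
  have agree : ∀ k i, N ≤ i + k → u i = w i := by
    intro k
    induction k with
    | zero => intro i hi; rw [hu i hi, hw i hi]
    | succ k ih =>
      intro i hi
      have := h i
      have := ih (i + 1) (by omega)
      have := ih (i + 2) (by omega)
      omega
  exact funext fun i => agree N i (by omega)

theorem exists_excess_eq {u : ℕ → ℕ} {N : ℕ} (hconv : ∀ i, 2 * u (i + 1) ≤ u i + u (i + 2))
    (hzero : ∀ i, N ≤ i → u i = 0) : ∃ s : Multiset ℕ, 0 ∉ s ∧ excess s = u := by
  set d : ℕ → ℕ := fun i => u i + u (i + 2) - 2 * u (i + 1)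
  set s : Multiset ℕ := ∑ i ∈ Finset.range N, Multiset.replicate (d i) (i + 1)
  have count_s : ∀ i, s.count (i + 1) = d i := by
    intro i
    have hd : N ≤ i → d i = 0 := fun hi => by simp [d, hzero i hi, hzero (i + 2) (by omega)]
    simpa [s, Multiset.count_sum', Multiset.count_replicate, eq_comm] using hd
  refine ⟨s, by simp [s, Multiset.mem_sum, Multiset.mem_replicate], ?_⟩
  refine eq_of_second_difference_eq (N := max N s.sum)
    (fun i hi => excess_eq_zero_of_sum_le (by omega)) (fun i hi => hzero i (by omega)) fun i => ?_
  have := excess_add_excess s i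
  have := hconv i
  have : s.count (i + 1) = u i + u (i + 2) - 2 * u (i + 1) := count_s i
  omega

end Excess

/-- The sequence `g` is discretely concave at all interior positions of `{0, …, n - 1}`. -/
def ConcaveBelow (n : ℕ) (g : ℕ → ℕ) : Prop :=
  ∀ i, i + 2 < n → g i + g (i + 2) ≤ 2 * g (i + 1)

theorem isKConvex_zero_iff {n p : ℕ} {f : Fin n → Fin p} {g : ℕ → ℕ}
    (hg : ∀ i : Fin n, g i = f i) : IsKConvex 0 f ↔ ConcaveBelow n g := by
  constructor
  · intro hf i hi
    have := hf ⟨i, by omega⟩ ⟨i + 1, by omega⟩ ⟨i + 2, hi⟩ rfl rfl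
    simp only [← hg] at this
    omega
  · intro hconc i j l hij hjl
    have : g i + g l ≤ 2 * g j := by
      rw [← hjl, ← hij]
      exact hconc i (by omega)
    simp only [← hg]
    omega

namespace ConcaveBelow

variable {n N : ℕ} {g : ℕ → ℕ}

theorem mono {m : ℕ} (hg : ConcaveBelow n g) (hmn : m ≤ n) : ConcaveBelow m g :=
  fun i hi => hg i (hi.trans_le hmn)

theorem reverse (hg : ConcaveBelow n g) : ConcaveBelow n fun i => g (n - 1 - i) := by
  intro i hi
  have := hg (n - 1 - (i + 2)) (by omega)
  rwa [show n - 1 - (i + 2) + 1 = n - 1 - (i + 1) by omega,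
    show n - 1 - (i + 2) + 2 = n - 1 - i by omega, add_comm] at this

theorem succ_lt_of_succ_lt (hg : ConcaveBelow n g) {i : ℕ} (hi : g (i + 1) < g i) (k : ℕ)
    (hk : i + k + 1 < n) : g (i + k + 1) < g (i + k) := by
  induction k with
  | zero => exact hi
  | succ k ih =>
    have := ih (by omega)
    have := hg (i + k) (by omega)
    change g (i + k + 2) < g (i + k + 1)
    omega

theorem add_le_of_succ_lt (hg : ConcaveBelow n g) {i : ℕ} (hi : g (i + 1) < g i) (k : ℕ)
    (hk : i + k < n) : g (i + k) + k ≤ g i := by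
  induction k with
  | zero => rfl
  | succ k ih =>
    have := ih (by omega)
    have := hg.succ_lt_of_succ_lt hi k hk
    change g (i + k + 1) + (k + 1) ≤ g i
    omega

theorem le_succ (hg : ConcaveBelow n g) {i : ℕ} (hi : i + (g i + 1) < n) : g i ≤ g (i + 1) := by
  by_contra! hlt
  have := hg.add_le_of_succ_lt hlt (g i + 1) hi
  omega

theorem monotoneOn (hg : ConcaveBelow n g) (hN : ∀ i < n, g i ≤ N) :
    MonotoneOn g (Set.Iic (n - 1 - N)) := by
  refine monotoneOn_of_le_succ Set.ordConnected_Iic fun i _ _ hi => ?_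
  rw [Set.mem_Iic, Nat.succ_eq_succ] at hi
  have := hN i (by omega)
  exact hg.le_succ (by omega)

theorem le_apply (hg : ConcaveBelow n g) (hN : ∀ i < n, g i ≤ N) (hn : 2 * N < n) {i : ℕ}
    (hi : i < n) : g i ≤ g N := by
  rcases le_total i N with hiN | hNi
  · exact hg.monotoneOn hN (Set.mem_Iic.2 (by omega)) (Set.mem_Iic.2 (by omega)) hiN
  · have := hg.reverse.monotoneOn (fun j _ => hN (n - 1 - j) (by omega))
      (a := n - 1 - i) (b := n - 1 - N) (Set.mem_Iic.2 (by omega)) (Set.mem_Iic.2 le_rfl)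
      (by omega)
    simpa only [show n - 1 - (n - 1 - i) = i by omega,
      show n - 1 - (n - 1 - N) = N by omega] using this

theorem apply_eq (hg : ConcaveBelow n g) (hN : ∀ i < n, g i ≤ N) (hn : 2 * N < n) {i : ℕ}
    (hNi : N ≤ i) (hi : i + N < n) : g i = g N :=
  (hg.le_apply hN hn (by omega)).antisymm <|
    hg.monotoneOn hN (Set.mem_Iic.2 (by omega)) (Set.mem_Iic.2 (by omega)) hNi

theorem exists_excess_eq_sub (hg : ConcaveBelow (N + 1) g) (hmax : ∀ i ≤ N, g i ≤ g N) :
    ∃ s : Multiset ℕ, 0 ∉ s ∧ ∀ i, excess s i = g N - g (min i N) := by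
  suffices hconv : ∀ i, 2 * (g N - g (min (i + 1) N)) ≤
      g N - g (min i N) + (g N - g (min (i + 2) N)) by
    obtain ⟨s, hs, hexcess⟩ :=
      exists_excess_eq (u := fun i => g N - g (min i N)) (N := N) hconv fun i hi => by simp [hi]
    exact ⟨s, hs, congrFun hexcess⟩
  intro i
  rcases lt_or_ge (i + 1) N with hi | hi
  · have := hg i (by omega)
    have := hmax i (by omega)
    have := hmax (i + 2) (by omega)
    rw [min_eq_left (by omega), min_eq_left (by omega), min_eq_left (by omega)]
    omega
  · simp [hi]

end ConcaveBelow

section PlateauSeq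

/-- The sequence on `{0, …, n - 1}` with peak value `m` whose shortfall from the peak is
`excess s` on the left and the mirror image of `excess t` on the right: the general form of a
`0`-convex word of length `n > 2 * m` with peak `m`. -/
def plateauSeq (n m : ℕ) (s t : Multiset ℕ) (i : ℕ) : ℕ :=
  m - (excess s i + excess t (n - 1 - i))

variable {n m : ℕ} {s t s' t' : Multiset ℕ}

theorem plateauSeq_le (n m : ℕ) (s t : Multiset ℕ) (i : ℕ) : plateauSeq n m s t i ≤ m :=
  Nat.sub_le _ _

theorem plateauSeq_reverse {i : ℕ} (hi : i < n) :
    plateauSeq n m s t (n - 1 - i) = plateauSeq n m t s i := by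
  rw [plateauSeq, plateauSeq, add_comm, show n - 1 - (n - 1 - i) = i by omega]

theorem plateauSeq_of_add_lt (ht : t.sum ≤ m) {i : ℕ} (hi : i + m < n) :
    plateauSeq n m s t i = m - excess s i := by
  rw [plateauSeq, excess_eq_zero_of_sum_le (s := t) (by omega), add_zero]

theorem plateauSeq_self (hn : 2 * m < n) (hs : s.sum ≤ m) (ht : t.sum ≤ m) :
    plateauSeq n m s t m = m := by
  rw [plateauSeq_of_add_lt ht (by omega), excess_eq_zero_of_sum_le hs, Nat.sub_zero]

theorem excess_add_excess_reverse_le (hn : 2 * m ≤ n) (hs : s.sum ≤ m) (ht : t.sum ≤ m) (i : ℕ) :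
    excess s i + excess t (n - 1 - i) ≤ m := by
  rcases lt_or_ge i m with him | hmi
  · rw [excess_eq_zero_of_sum_le (s := t) (by omega), add_zero]
    exact (excess_le_sum s i).trans hs
  · rw [excess_eq_zero_of_sum_le (s := s) (hs.trans hmi), zero_add]
    exact (excess_le_sum t _).trans ht

theorem concaveBelow_plateauSeq (hn : 2 * m ≤ n) (hs : s.sum ≤ m) (ht : t.sum ≤ m) :
    ConcaveBelow n (plateauSeq n m s t) := by
  intro i hi
  have hbound := excess_add_excess_reverse_le hn hs ht
  have := hbound i
  have := hbound (i + 2)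
  have left_convex := excess_add_excess s i
  have right_convex := excess_add_excess t (n - 1 - (i + 2))
  rw [show n - 1 - (i + 2) + 1 = n - 1 - (i + 1) by omega,
    show n - 1 - (i + 2) + 2 = n - 1 - i by omega] at right_convex
  simp only [plateauSeq]
  omega

theorem excess_eq_of_plateauSeq_eq (hn : 2 * m < n) (hs : s.sum ≤ m) (ht : t.sum ≤ m)
    (hs' : s'.sum ≤ m) (ht' : t'.sum ≤ m)
    (h : ∀ i < n, plateauSeq n m s t i = plateauSeq n m s' t' i) : excess s = excess s' := by
  funext i
  rcases lt_or_ge (i + m) n with hi | hi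
  · have heq := h i (by omega)
    rw [plateauSeq_of_add_lt ht hi, plateauSeq_of_add_lt ht' hi] at heq
    have := excess_le_sum s i
    have := excess_le_sum s' i
    omega
  · rw [excess_eq_zero_of_sum_le (by omega), excess_eq_zero_of_sum_le (by omega)]

theorem ConcaveBelow.exists_plateauSeq_eq {N : ℕ} {g : ℕ → ℕ} (hg : ConcaveBelow n g)
    (hN : ∀ i < n, g i ≤ N) (hn : 2 * N < n) :
    ∃ s t : Multiset ℕ, (0 ∉ s ∧ s.sum ≤ g N) ∧ (0 ∉ t ∧ t.sum ≤ g N) ∧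
      ∀ i < n, plateauSeq n (g N) s t i = g i := by
  have peak_reverse : g (n - 1 - N) = g N := hg.apply_eq hN hn (by omega) (by omega)
  obtain ⟨s, hs, hexs⟩ := (hg.mono (by omega : N + 1 ≤ n)).exists_excess_eq_sub
    fun i _ => hg.le_apply hN hn (by omega)
  obtain ⟨t, ht, hext⟩ := (hg.reverse.mono (by omega : N + 1 ≤ n)).exists_excess_eq_sub
    fun i _ => peak_reverse ▸ hg.le_apply hN hn (by omega)
  rw [peak_reverse] at hext
  refine ⟨s, t, ⟨hs, ?_⟩, ⟨ht, ?_⟩, fun i hi => ?_⟩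
  · rw [← excess_zero_right, hexs]; exact Nat.sub_le _ _
  · rw [← excess_zero_right, hext]; exact Nat.sub_le _ _
  have hi_le := hg.le_apply hN hn hi
  rw [plateauSeq, hexs, hext]
  rcases le_or_gt i N with hiN | hNi
  · rw [min_eq_left hiN, min_eq_right (by omega), peak_reverse]
    omega
  · rw [min_eq_right hNi.le]
    rcases le_total (n - 1 - i) N with hright | hmid
    · rw [min_eq_left hright, show n - 1 - (n - 1 - i) = i by omega]
      omega
    · rw [min_eq_right hmid, peak_reverse, hg.apply_eq hN hn hNi.le (by omega)]
      omega

end PlateauSeq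

/-- The partitions of the integers `0, …, m`: the data describing either flank of a word with
peak `m`. -/
abbrev BoundedPartition (m : ℕ) : Type := Σ j : Fin (m + 1), Nat.Partition j

namespace BoundedPartition

variable {m : ℕ}

/-- The multiset of parts, forgetting which integer is partitioned. -/
def parts (x : BoundedPartition m) : Multiset ℕ := x.2.parts

theorem zero_notMem_parts (x : BoundedPartition m) : 0 ∉ x.parts :=
  fun h => (x.2.parts_pos h).ne rfl

theorem sum_parts_le (x : BoundedPartition m) : x.parts.sum ≤ m :=
  x.2.parts_sum.trans_le (Nat.le_of_lt_succ x.1.2)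

theorem parts_injective : Function.Injective (parts : BoundedPartition m → Multiset ℕ) := by
  rintro ⟨⟨j, _⟩, ⟨s, _, (hj : s.sum = j)⟩⟩ ⟨⟨k, _⟩, ⟨t, _, (hk : t.sum = k)⟩⟩ (hst : s = t)
  subst hst hj hk
  rfl

theorem exists_parts_eq {s : Multiset ℕ} (hs : 0 ∉ s) (hsum : s.sum ≤ m) :
    ∃ x : BoundedPartition m, x.parts = s :=
  ⟨⟨⟨s.sum, Nat.lt_succ_of_le hsum⟩, s,
    fun hx => Nat.pos_of_ne_zero (ne_of_mem_of_not_mem hx hs), rfl⟩, rfl⟩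

theorem card_eq (m : ℕ) : Fintype.card (BoundedPartition m) =
    ∑ j ∈ Finset.range (m + 1), Fintype.card (Nat.Partition j) := by
  rw [Fintype.card_sigma, Finset.sum_range]

end BoundedPartition

section PlateauWord

variable {n p : ℕ}

/-- The word of length `n` on `p` letters with a given peak and given left and right flanks. -/
def plateauWord (n p : ℕ) (x : Σ m : Fin p, BoundedPartition m × BoundedPartition m) :
    Fin n → Fin p :=
  fun i => ⟨plateauSeq n x.1 x.2.1.parts x.2.2.parts i, (plateauSeq_le ..).trans_lt x.1.2⟩

theorem isKConvex_zero_plateauWord (hn : 2 * (p - 1) < n)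
    (x : Σ m : Fin p, BoundedPartition m × BoundedPartition m) :
    IsKConvex 0 (plateauWord n p x) :=
  (isKConvex_zero_iff fun _ => rfl).2 <|
    concaveBelow_plateauSeq (by omega) x.2.1.sum_parts_le x.2.2.sum_parts_le

theorem plateauWord_injective (hn : 2 * (p - 1) < n) :
    Function.Injective (plateauWord n p) := by
  rintro ⟨⟨m, hm⟩, x, y⟩ ⟨⟨m', hm'⟩, x', y'⟩ h
  have hseq : ∀ i < n, plateauSeq n m x.parts y.parts i = plateauSeq n m' x'.parts y'.parts i :=
    fun i hi => congrArg Fin.val (congrFun h ⟨i, hi⟩)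
  obtain rfl : m = m' := by
    have hle := hseq m (by omega) ▸ plateauSeq_le n m' x'.parts y'.parts m
    have hge := hseq m' (by omega) ▸ plateauSeq_le n m x.parts y.parts m'
    rw [plateauSeq_self (by omega) x.sum_parts_le y.sum_parts_le] at hle
    rw [plateauSeq_self (by omega) x'.sum_parts_le y'.sum_parts_le] at hge
    exact hle.antisymm hge
  have hreverse : ∀ i < n,
      plateauSeq n m y.parts x.parts i = plateauSeq n m y'.parts x'.parts i := fun i hi => by
    rw [← plateauSeq_reverse hi, ← plateauSeq_reverse hi, hseq _ (by omega)]
  obtain rfl : x = x' := BoundedPartition.parts_injective <|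
    eq_of_excess_eq x.zero_notMem_parts x'.zero_notMem_parts <|
      excess_eq_of_plateauSeq_eq (by omega) x.sum_parts_le y.sum_parts_le x'.sum_parts_le
        y'.sum_parts_le hseq
  obtain rfl : y = y' := BoundedPartition.parts_injective <|
    eq_of_excess_eq y.zero_notMem_parts y'.zero_notMem_parts <|
      excess_eq_of_plateauSeq_eq (by omega) y.sum_parts_le x.sum_parts_le y'.sum_parts_le
        x.sum_parts_le hreverse
  rfl

theorem exists_plateauWord_eq (hn : 2 * (p - 1) < n) {f : Fin n → Fin p} (hf : IsKConvex 0 f) :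
    ∃ x, plateauWord n p x = f := by
  set g : ℕ → ℕ := Function.extend Fin.val (fun i => (f i : ℕ)) 0
  have hg : ∀ i : Fin n, g i = f i := Fin.val_injective.extend_apply _ _
  have hlt : ∀ i < n, g i < p := fun i hi => hg ⟨i, hi⟩ ▸ (f ⟨i, hi⟩).2
  obtain ⟨s, t, ⟨hs, hs_sum⟩, ⟨ht, ht_sum⟩, hgst⟩ :=
    ((isKConvex_zero_iff hg).1 hf).exists_plateauSeq_eq
      (fun i hi => Nat.le_sub_one_of_lt (hlt i hi)) hn
  obtain ⟨x, rfl⟩ := BoundedPartition.exists_parts_eq hs hs_sum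
  obtain ⟨y, rfl⟩ := BoundedPartition.exists_parts_eq ht ht_sum
  exact ⟨⟨⟨g (p - 1), hlt _ (by omega)⟩, x, y⟩,
    funext fun i => Fin.ext <| (hgst i i.2).trans (hg i)⟩

end PlateauWord

/-- for `p ≥ 1` and `n > 2(p-1)`, the number of 0-convex words of
length `n` on `[p]` equals `Σ_{m=1}^{p} (Σ_{j=0}^{m-1} a(j))²`, where `a(j)` is the
number of integer partitions of `j`. -/
theorem zero_convex_words_count (p : ℕ) (hp : 1 ≤ p) (n : ℕ) (hn : 2 * (p - 1) < n) :
    Nat.card {f : Fin n → Fin p // IsKConvex 0 f}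
      = ∑ m ∈ Finset.Icc 1 p,
          (∑ j ∈ Finset.range m, Fintype.card (Nat.Partition j)) ^ 2 := by
  let A : ℕ → ℕ := fun m => ∑ j ∈ Finset.range m, Fintype.card (Nat.Partition j)
  let e : (Σ m : Fin p, BoundedPartition m × BoundedPartition m) ≃
      {f : Fin n → Fin p // IsKConvex 0 f} :=
    Equiv.ofBijective (fun x => ⟨plateauWord n p x, isKConvex_zero_plateauWord hn x⟩)
      ⟨fun _ _ h => plateauWord_injective hn (congrArg Subtype.val h),
        fun f => (exists_plateauWord_eq hn f.2).imp fun _ => Subtype.ext⟩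
  calc Nat.card {f : Fin n → Fin p // IsKConvex 0 f}
      = ∑ m : Fin p, A (m + 1) ^ 2 := by
        rw [← Nat.card_congr e, Nat.card_eq_fintype_card, Fintype.card_sigma]
        simp only [Fintype.card_prod, BoundedPartition.card_eq, sq, A]
    _ = ∑ m ∈ Finset.range p, A (m + 1) ^ 2 := (Finset.sum_range fun m => A (m + 1) ^ 2).symm
    _ = ∑ m ∈ Finset.Icc 1 p, A m ^ 2 := by
        rw [Finset.range_eq_Ico, Finset.sum_Ico_add' (fun m => A m ^ 2), zero_add,
          Finset.Ico_add_one_right_eq_Icc]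
end

section
/- For k ∈ {1, 2} and every integer n ≥ 1, the number f_k(n) of k-convex permutations of [n] satisfies f_k(n) ≤ 2^(n−1). -/
/-- `f_k(n)`: the number of `k`-convex permutations of `[n]`. -/
noncomputable def fk (k n : ℕ) : ℕ :=
  Nat.card {π : Equiv.Perm (Fin n) // IsKConvex k ⇑π}

/-!
For `k ≤ 2` a `k`-convex permutation has no local minimum at an interior position: both neighbours
of such a minimum would exceed it by at least `1`, and by different amounts, so its second
difference would be at least `3`. A permutation without interior local minima increases up to its
maximum and decreases afterwards, so it can be recovered from the set of values that precede the
maximum. This is an arbitrary set of non-maximal values, which leaves `2 ^ (n - 1)` possibilities.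
-/

open Set

section Unimodal

variable {α β : Type*} [LinearOrder α] [LinearOrder β]

/-- Unimodality of a function on a linear order, in the form of quasiconcavity: no value lies
strictly below both a value to its left and a value to its right. This form does not mention the
mode, which need not exist when the order is infinite. -/
def IsUnimodal (f : α → β) : Prop :=
  ∀ ⦃i j l⦄, i ≤ j → j ≤ l → min (f i) (f l) ≤ f j

theorem isUnimodal_of_covBy [LocallyFiniteOrder α] {f : α → β} (hf : f.Injective)
    (h : ∀ ⦃i j l⦄, i ⋖ j → j ⋖ l → min (f i) (f l) ≤ f j) : IsUnimodal f := by
  intro i j l hij hjl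
  obtain ⟨m, hm, hmin⟩ := (Finset.Icc i l).exists_min_image f ⟨j, Finset.mem_Icc.2 ⟨hij, hjl⟩⟩
  simp only [Finset.mem_Icc] at hm hmin
  suffices min (f i) (f l) ≤ f m from this.trans (hmin j ⟨hij, hjl⟩)
  by_contra! hlt
  obtain ⟨hmi, hml⟩ := lt_min_iff.1 hlt
  obtain ⟨a, hia, ham⟩ := exists_le_covBy_of_lt (hm.1.lt_of_ne (by rintro rfl; exact hmi.false))
  obtain ⟨b, hmb, hbl⟩ := exists_covBy_le_of_lt (hm.2.lt_of_ne (by rintro rfl; exact hml.false))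
  have hma : f m < f a := (hmin a ⟨hia, ham.le.trans hm.2⟩).lt_of_ne (hf.ne ham.ne')
  have hmb' : f m < f b := (hmin b ⟨hm.1.trans hmb.le, hbl⟩).lt_of_ne (hf.ne hmb.ne)
  exact (lt_min hma hmb').not_ge (h ham hmb)

namespace IsUnimodal

variable {f : α → β} {p : α}

theorem strictMonoOn_Iic (hf : IsUnimodal f) (hinj : f.Injective) (hp : ∀ i, f i ≤ f p) :
    StrictMonoOn f (Iic p) := fun i _ j hj hij =>
  lt_of_le_of_ne (by simpa [hp i] using hf hij.le hj) (hinj.ne hij.ne)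

theorem strictAntiOn_Ici (hf : IsUnimodal f) (hinj : f.Injective) (hp : ∀ i, f i ≤ f p) :
    StrictAntiOn f (Ici p) := fun i hi j _ hij =>
  lt_of_le_of_ne (by simpa [hp j] using hf hi hij.le) (hinj.ne hij.ne')

end IsUnimodal

end Unimodal

section ImageDetermines

variable {α β : Type*} [LinearOrder α] [Preorder β] {f g : α → β} {s : Set α}

theorem eqOn_of_strictMonoOn_of_image_eq [WellFoundedLT α] (hf : StrictMonoOn f s)
    (hg : StrictMonoOn g s) (h : f '' s = g '' s) : EqOn f g s := by
  rw [← domRestrict_eq_domRestrict_iff,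
    ← StrictMono.range_inj (strictMono_domRestrict.2 hf) (strictMono_domRestrict.2 hg),
    range_domRestrict, range_domRestrict, h]

theorem eqOn_of_strictAntiOn_of_image_eq [WellFoundedGT α] (hf : StrictAntiOn f s)
    (hg : StrictAntiOn g s) (h : f '' s = g '' s) : EqOn f g s :=
  eqOn_of_strictMonoOn_of_image_eq (α := αᵒᵈ) hf.dual_left hg.dual_left h

end ImageDetermines

section Counting

variable (α β : Type*) [LinearOrder α] [LinearOrder β] [OrderTop β] [Finite β]

theorem injOn_image_Iio_symm_top :
    InjOn (fun π : α ≃ β => π '' Iio (π.symm ⊤)) {π | IsUnimodal π} := by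
  intro π hπ σ hσ (himage : π '' Iio (π.symm ⊤) = σ '' Iio (σ.symm ⊤))
  have : Finite α := .of_equiv β π.symm
  have hncard : StrictMono fun a : α => (Iio a).ncard :=
    ncard_strictMono.comp fun _ _ => Iio_ssubset_Iio
  have hmode : π.symm ⊤ = σ.symm ⊤ := hncard.injective <| by
    simpa only [ncard_image_of_injective _ (Equiv.injective _)] using congrArg ncard himage
  have hπmax (i : α) : π i ≤ π (π.symm ⊤) := by simp
  have hσmax (i : α) : σ i ≤ σ (π.symm ⊤) := by simp [hmode]
  rw [← hmode] at himage
  have hleft : EqOn π σ (Iio (π.symm ⊤)) := eqOn_of_strictMonoOn_of_image_eq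
    ((hπ.strictMonoOn_Iic π.injective hπmax).mono Iio_subset_Iic_self)
    ((hσ.strictMonoOn_Iic σ.injective hσmax).mono Iio_subset_Iic_self) himage
  have hright : EqOn π σ (Ici (π.symm ⊤)) := eqOn_of_strictAntiOn_of_image_eq
    (hπ.strictAntiOn_Ici π.injective hπmax) (hσ.strictAntiOn_Ici σ.injective hσmax) <| by
      rw [← compl_Iio, image_compl_eq π.bijective, image_compl_eq σ.bijective, himage]
  exact Equiv.ext fun i => (lt_or_ge i (π.symm ⊤)).elim (@hleft i) (@hright i)

theorem ncard_isUnimodal_le : {π : α ≃ β | IsUnimodal π}.ncard ≤ 2 ^ (Nat.card β - 1) := by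
  have hmaps (π : α ≃ β) : π '' Iio (π.symm ⊤) ∈ 𝒫 ({⊤}ᶜ : Set β) := by
    rintro _ ⟨i, hi, rfl⟩ htop
    exact hi.ne (π.eq_symm_apply.2 htop)
  calc {π : α ≃ β | IsUnimodal π}.ncard
      ≤ (𝒫 ({⊤}ᶜ : Set β)).ncard :=
        ncard_le_ncard_of_injOn _ (fun π _ => hmaps π) (injOn_image_Iio_symm_top α β)
    _ = 2 ^ (Nat.card β - 1) := by rw [ncard_powerset, ncard_compl, ncard_singleton]

end Counting

theorem IsKConvex.isUnimodal {k n p : ℕ} {f : Fin n → Fin p} (h : IsKConvex k f) (hk : k ≤ 2)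
    (hf : f.Injective) : IsUnimodal f := by
  refine isUnimodal_of_covBy hf fun i j l hij hjl => ?_
  by_contra! hlt
  have hil : (f i : ℕ) ≠ f l := Fin.val_ne_of_ne (hf.ne (hij.lt.trans hjl.lt).ne)
  have hconv := h i j l (Nat.covBy_iff_add_one_eq.1 (Fin.covBy_iff.1 hij))
    (Nat.covBy_iff_add_one_eq.1 (Fin.covBy_iff.1 hjl))
  simp only [lt_min_iff, Fin.lt_def] at hlt
  omega

theorem kconvex_perm_upper_bound_general (k : ℕ) (hk : k ≤ 2) (n : ℕ) (hn : 1 ≤ n) :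
    fk k n ≤ 2 ^ (n - 1) := by
  have : NeZero n := ⟨by omega⟩
  calc fk k n
      = {π : Equiv.Perm (Fin n) | IsKConvex k π}.ncard := rfl
    _ ≤ {π : Equiv.Perm (Fin n) | IsUnimodal π}.ncard :=
        ncard_le_ncard fun π hπ => IsKConvex.isUnimodal hπ hk π.injective
    _ ≤ 2 ^ (Nat.card (Fin n) - 1) := ncard_isUnimodal_le (Fin n) (Fin n)
    _ = 2 ^ (n - 1) := by rw [Nat.card_fin]

/-- for `k ∈ {1, 2}` and `n ≥ 1`, `f_k(n) ≤ 2^(n-1)`. -/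
theorem kconvex_perm_upper_bound (k : ℕ) (hk : k = 1 ∨ k = 2) (n : ℕ) (hn : 1 ≤ n) :
    fk k n ≤ 2 ^ (n - 1) :=
  kconvex_perm_upper_bound_general k (by omega) n hn
end

section
/- Let k ∈ {0, 1, 2}, let n ≥ 2, and let π be a k-convex permutation of [n]. Let i₀ be the index with π(i₀) = n, and define σ on [n−1] by σ(i) = π(i) for i < i₀ and σ(i) = π(i+1) for i₀ ≤ i ≤ n−1 (i.e., delete the entry n from the one-line notation of π). Then σ is a k-convex permutation of [n−1]. -/
section Deletion

variable {k n p q : ℕ}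

theorem isKConvex_congr_val {f : Fin n → Fin p} {g : Fin n → Fin q}
    (h : ∀ i, (f i : ℕ) = (g i : ℕ)) : IsKConvex k f ↔ IsKConvex k g := by
  simp only [IsKConvex, h]

theorem val_succAbove_consecutive_or_straddle (i₀ : Fin (n + 1)) {i j : Fin n}
    (hij : (i : ℕ) + 1 = (j : ℕ)) :
    (i₀.succAbove i : ℕ) + 1 = (i₀.succAbove j : ℕ) ∨
      (i₀.succAbove i : ℕ) + 1 = (i₀ : ℕ) ∧ (i₀ : ℕ) + 1 = (i₀.succAbove j : ℕ) := by
  simp only [Fin.succAbove, Fin.lt_def, Fin.val_castSucc]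
  split_ifs <;> simp only [Fin.val_castSucc, Fin.val_succ] <;> omega

-- Only the windows straddling `i₀` are new. Each of them arises from a window of `f` with outer
-- entry `f i₀` by replacing that entry with a neighbour of it, which is no larger.
theorem IsKConvex.comp_succAbove_of_neighbors_le {f : Fin (n + 1) → Fin p}
    (hf : IsKConvex k f) {i₀ : Fin (n + 1)}
    (hpeak : ∀ x : Fin (n + 1), (x : ℕ) + 1 = (i₀ : ℕ) ∨ (i₀ : ℕ) + 1 = (x : ℕ) → f x ≤ f i₀) :
    IsKConvex k (f ∘ i₀.succAbove) := by
  intro i j l hij hjl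
  simp only [Function.comp_apply]
  rcases val_succAbove_consecutive_or_straddle i₀ hij with hij' | ⟨hi, hj⟩ <;>
    rcases val_succAbove_consecutive_or_straddle i₀ hjl with hjl' | ⟨hj', hl⟩
  · exact hf _ _ _ hij' hjl'
  · have hle : (f (i₀.succAbove l) : ℕ) ≤ f i₀ := hpeak _ (.inr hl)
    have hwindow := hf _ _ _ hij' hj'
    omega
  · have hle : (f (i₀.succAbove i) : ℕ) ≤ f i₀ := hpeak _ (.inl hi)
    have hwindow := hf _ _ _ hj hjl'
    omega
  · omega

end Deletion

theorem delete_max_kconvex_general (k n : ℕ) (π : Equiv.Perm (Fin n)) (hπ : IsKConvex k ⇑π)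
    (i₀ : Fin n) (hi₀ : (π i₀ : ℕ) = n - 1)
    (σ : Fin (n - 1) → Fin (n - 1))
    (hσ : ∀ i : Fin (n - 1), (σ i : ℕ) =
      if (i : ℕ) < (i₀ : ℕ) then (π ⟨(i : ℕ), by have := i.2; omega⟩ : ℕ)
      else (π ⟨(i : ℕ) + 1, by have := i.2; omega⟩ : ℕ)) :
    Function.Bijective σ ∧ IsKConvex k σ := by
  obtain _ | m := n
  · exact i₀.elim0
  have hval : ∀ i : Fin m, (σ i : ℕ) = (π (i₀.succAbove i) : ℕ) := fun i ↦ by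
    rw [hσ, Fin.succAbove, apply_ite π, apply_ite Fin.val]
    rfl
  have hmax : ∀ x, π x ≤ π i₀ := fun x ↦ Fin.le_def.2 <| hi₀ ▸ Fin.is_le (π x)
  have hinj : Function.Injective σ := fun a b hab ↦
    Fin.succAbove_right_injective <| π.injective <| Fin.ext <| by rw [← hval, ← hval, hab]
  exact ⟨hinj.bijective_of_finite,
    (isKConvex_congr_val hval).2 (hπ.comp_succAbove_of_neighbors_le fun x _ ↦ hmax x)⟩

/-- let `k ∈ {0,1,2}`, `n ≥ 2`, and `π` a `k`-convex permutation of `[n]`.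
If `i₀` is the position of the maximal entry `n` (0-indexed value `n - 1`), and `σ` is
obtained from `π` by deleting that entry, then `σ` is a `k`-convex permutation of
`[n-1]`. -/
theorem delete_max_kconvex (k n : ℕ) (hk : k ≤ 2) (hn : 2 ≤ n)
    (π : Equiv.Perm (Fin n)) (hπ : IsKConvex k ⇑π)
    (i₀ : Fin n) (hi₀ : (π i₀ : ℕ) = n - 1)
    (σ : Fin (n - 1) → Fin (n - 1))
    (hσ : ∀ i : Fin (n - 1), (σ i : ℕ) =
      if (i : ℕ) < (i₀ : ℕ) then (π ⟨(i : ℕ), by have := i.2; omega⟩ : ℕ)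
      else (π ⟨(i : ℕ) + 1, by have := i.2; omega⟩ : ℕ)) :
    Function.Bijective σ ∧ IsKConvex k σ :=
  delete_max_kconvex_general k n π hπ i₀ hi₀ σ hσ
end

section
/- For k ∈ {1, 2} and every integer n ≥ 1, the number f_k(n) of k-convex permutations of [n] satisfies f_k(n) ≤ f_k(n+1) ≤ 2·f_k(n). -/
/-!
For `k ≤ 2` a `k`-convex permutation has no interior local minimum, since the two neighbours of such
a minimum `m` would be at least `m + 1` and `m + 2`. So the value `0` sits at an end, and deleting
it leaves a `k`-convex permutation that arises in this way from at most two others: this is the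
upper bound.

For the lower bound, a new minimum can be added at some end of every `k`-convex permutation. This
fails at an end only if the entry next to that end is at least `k + 2 ≥ 3`. If it failed at both,
all interior entries would be at least `3`, leaving only two positions for the values `0`, `1`, `2`.
-/

open Equiv Fin Function

section Convexity

variable {k n p : ℕ}

theorem isKConvex_of_le_two (hn : n ≤ 2) (f : Fin n → Fin p) : IsKConvex k f :=
  fun _ _ _ _ _ => by lia

theorem isKConvex_succ_comp {f : Fin n → Fin p} :
    IsKConvex k (Fin.succ ∘ f) ↔ IsKConvex k f := by
  refine forall₅_congr fun i j l _ _ => ?_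
  simp only [comp_apply, Fin.val_succ]
  lia

theorem IsKConvex.comp_succ {f : Fin (n + 1) → Fin p} (hf : IsKConvex k f) :
    IsKConvex k (f ∘ Fin.succ) :=
  fun i j l hij hjl => hf i.succ j.succ l.succ (by simpa using hij) (by simpa using hjl)

theorem IsKConvex.comp_rev {f : Fin n → Fin p} (hf : IsKConvex k f) : IsKConvex k (f ∘ rev) := by
  intro i j l hij hjl
  have := hf l.rev j.rev i.rev (by simp only [val_rev]; lia) (by simp only [val_rev]; lia)
  simp only [comp_apply]
  lia

theorem isKConvex_comp_rev {f : Fin n → Fin p} : IsKConvex k (f ∘ rev) ↔ IsKConvex k f :=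
  ⟨fun hf => by simpa [comp_def] using hf.comp_rev, IsKConvex.comp_rev⟩

theorem isKConvex_iff_comp_succ {f : Fin (n + 3) → Fin p} :
    IsKConvex k f ↔ ((f 0 : ℕ) : ℤ) + ((f 2 : ℕ) : ℤ) - 2 * ((f 1 : ℕ) : ℤ) ≤ k ∧
      IsKConvex k (f ∘ Fin.succ) := by
  refine ⟨fun hf => ⟨hf 0 1 2 rfl rfl, hf.comp_succ⟩, fun ⟨hhead, htail⟩ i j l hij hjl => ?_⟩
  obtain ⟨j, rfl⟩ := exists_succ_eq.2 (show j ≠ 0 by rintro rfl; simp at hij)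
  obtain ⟨l, rfl⟩ := exists_succ_eq.2 (show l ≠ 0 by rintro rfl; simp at hjl)
  cases i using Fin.cases with
  | zero =>
    obtain rfl : j = 0 := Fin.ext (by simpa using hij.symm)
    obtain rfl : l = 1 := Fin.ext (by simpa using hjl.symm)
    exact hhead
  | succ i => exact htail i j l (by simpa using hij) (by simpa using hjl)

theorem IsKConvex.neighbor_lt_or_neighbor_lt (hk : k ≤ 2) {f : Fin n → Fin p} (hf : IsKConvex k f)
    (hinj : Injective f) {i j l : Fin n} (hij : (i : ℕ) + 1 = j) (hjl : (j : ℕ) + 1 = l) :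
    f i < f j ∨ f l < f j := by
  have hconv := hf i j l hij hjl
  have hne_ij : f i ≠ f j := hinj.ne (by lia)
  have hne_lj : f l ≠ f j := hinj.ne (by lia)
  have hne_il : f i ≠ f l := hinj.ne (by lia)
  omega

theorem IsKConvex.endpoint_le_or_endpoint_le (hk : k ≤ 2) {f : Fin n → Fin p} (hf : IsKConvex k f)
    (hinj : Injective f) {a b j : Fin n} (haj : a ≤ j) (hjb : j ≤ b) :
    f a ≤ f j ∨ f b ≤ f j := by
  obtain ⟨m, hm, hmin⟩ := (Finset.Icc a b).exists_min_image f ⟨j, Finset.mem_Icc.2 ⟨haj, hjb⟩⟩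
  simp only [Finset.mem_Icc] at hm hmin
  suffices hend : m = a ∨ m = b by
    have := hmin j ⟨haj, hjb⟩
    rcases hend with rfl | rfl
    · exact .inl this
    · exact .inr this
  by_contra! hne
  let i : Fin n := ⟨m - 1, by lia⟩
  let l : Fin n := ⟨m + 1, by lia⟩
  rcases hf.neighbor_lt_or_neighbor_lt hk hinj (i := i) (j := m) (l := l) (by lia) rfl with h | h
  · exact (hmin i (by grind)).not_gt h
  · exact (hmin l (by grind)).not_gt h

theorem IsKConvex.eq_zero_or_eq_last_of_apply_eq_zero (hk : k ≤ 2) {f : Fin (n + 1) → Fin (p + 1)}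
    (hf : IsKConvex k f) (hinj : Injective f) {j : Fin (n + 1)} (hj : f j = 0) :
    j = 0 ∨ j = last n := by
  have hmin := hf.endpoint_le_or_endpoint_le hk hinj (zero_le j) (le_last j)
  rw [hj, le_zero_iff, le_zero_iff, ← hj] at hmin
  exact hmin.imp (fun h => (hinj h).symm) fun h => (hinj h).symm

end Convexity

section InsertMin

variable {n : ℕ}

/-- The permutation of `Fin (n + 1)` obtained from `π` by raising all its values by one and
inserting the value `0` at position `p`. -/
def insertMin (p : Fin (n + 1)) (π : Perm (Fin n)) : Perm (Fin (n + 1)) :=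
  (finSuccEquiv' p).trans (π.optionCongr.trans (finSuccEquiv n).symm)

theorem insertMin_apply_self (p : Fin (n + 1)) (π : Perm (Fin n)) : insertMin p π p = 0 := by
  simp [insertMin]

theorem insertMin_apply_succAbove (p : Fin (n + 1)) (π : Perm (Fin n)) (i : Fin n) :
    insertMin p π (p.succAbove i) = (π i).succ := by
  simp [insertMin]

theorem insertMin_zero_comp_succ (π : Perm (Fin n)) : insertMin 0 π ∘ Fin.succ = Fin.succ ∘ π :=
  funext fun i => by simpa using insertMin_apply_succAbove 0 π i

theorem insertMin_comp_rev (p : Fin (n + 1)) (π : Perm (Fin n)) :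
    insertMin p π ∘ rev = insertMin p.rev (revPerm.trans π) := by
  funext i
  cases i using p.rev.succAboveCases with
  | x => simp [insertMin_apply_self]
  | p i => simp [insertMin_apply_succAbove, rev_succAbove]

theorem insertMin_injective2 : Injective2 (insertMin (n := n)) := by
  intro p q π τ h
  obtain rfl : p = q := (insertMin p π).injective <| by
    rw [insertMin_apply_self, h, insertMin_apply_self]
  refine ⟨rfl, Equiv.ext fun i => succ_injective _ ?_⟩
  rw [← insertMin_apply_succAbove p, h, insertMin_apply_succAbove]

theorem exists_insertMin_eq (σ : Perm (Fin (n + 1))) : ∃ p π, insertMin p π = σ := by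
  have hbij : Bijective (uncurry (insertMin (n := n))) :=
    (Fintype.bijective_iff_injective_and_card _).2
      ⟨insertMin_injective2.uncurry, by simp [Fintype.card_perm, Nat.factorial_succ]⟩
  obtain ⟨⟨p, π⟩, h⟩ := hbij.surjective σ
  exact ⟨p, π, h⟩

end InsertMin

section Growth

variable {k n : ℕ}

theorem isKConvex_insertMin_last_iff {π : Perm (Fin n)} :
    IsKConvex k (insertMin (last n) π) ↔ IsKConvex k (insertMin 0 (revPerm.trans π)) := by
  rw [← isKConvex_comp_rev, insertMin_comp_rev, rev_last]

theorem isKConvex_insertMin_zero_iff {π : Perm (Fin (n + 2))} :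
    IsKConvex k (insertMin 0 π) ↔ (π 1 : ℕ) ≤ 2 * π 0 + k + 1 ∧ IsKConvex k π := by
  have h1 : insertMin 0 π 1 = (π 0).succ := congrFun (insertMin_zero_comp_succ π) 0
  have h2 : insertMin 0 π 2 = (π 1).succ := congrFun (insertMin_zero_comp_succ π) 1
  rw [isKConvex_iff_comp_succ, insertMin_zero_comp_succ, isKConvex_succ_comp,
    insertMin_apply_self, h1, h2]
  refine and_congr_left' ?_
  simp only [val_succ, val_zero]
  omega

theorem IsKConvex.of_insertMin_zero {π : Perm (Fin n)} (h : IsKConvex k (insertMin 0 π)) :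
    IsKConvex k π := by
  simpa only [insertMin_zero_comp_succ, isKConvex_succ_comp] using h.comp_succ

theorem IsKConvex.of_insertMin_last {π : Perm (Fin n)} (h : IsKConvex k (insertMin (last n) π)) :
    IsKConvex k π :=
  isKConvex_comp_rev.1 (isKConvex_insertMin_last_iff.1 h).of_insertMin_zero

theorem IsKConvex.apply_one_le_or_apply_rev_one_le (hk1 : 1 ≤ k) (hk2 : k ≤ 2)
    {π : Perm (Fin (n + 2))} (hπ : IsKConvex k π) :
    (π 1 : ℕ) ≤ 2 * π 0 + k + 1 ∨ (π (rev 1) : ℕ) ≤ 2 * π (rev 0) + k + 1 := by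
  by_contra! ⟨hleft, hright⟩
  obtain ⟨v, hv, hv_zero, hv_last⟩ : ∃ v ≤ 2, v ≠ (π 0 : ℕ) ∧ v ≠ (π (rev 0) : ℕ) := by
    by_contra! h
    have := h 0
    have := h 1
    have := h 2
    lia
  obtain ⟨j, hj⟩ := π.surjective ⟨v, by lia⟩
  have hj_zero : j ≠ 0 := by
    rintro rfl
    exact hv_zero (by rw [hj])
  have hj_last : j.rev ≠ 0 := by
    rw [ne_eq, rev_eq_iff]
    rintro rfl
    exact hv_last (by rw [hj])
  have hmin : π 1 ≤ π j ∨ π (rev 1) ≤ π j :=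
    hπ.endpoint_le_or_endpoint_le hk2 π.injective (one_le_of_ne_zero hj_zero)
      (le_rev_iff.2 (one_le_of_ne_zero hj_last))
  simp only [hj, Fin.le_def] at hmin
  omega

theorem IsKConvex.exists_insertMin (hk1 : 1 ≤ k) (hk2 : k ≤ 2) {π : Perm (Fin n)}
    (hπ : IsKConvex k π) : ∃ p, IsKConvex k (insertMin p π) := by
  rcases Nat.lt_or_ge n 2 with hn | hn
  · exact ⟨0, isKConvex_of_le_two hn _⟩
  obtain ⟨n, rfl⟩ := Nat.exists_eq_add_of_le' hn
  rcases hπ.apply_one_le_or_apply_rev_one_le hk1 hk2 with hleft | hright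
  · exact ⟨0, isKConvex_insertMin_zero_iff.2 ⟨hleft, hπ⟩⟩
  · exact ⟨last _, isKConvex_insertMin_last_iff.2 (isKConvex_insertMin_zero_iff.2
      ⟨hright, hπ.comp_rev⟩)⟩

theorem IsKConvex.exists_eq_insertMin_end (hk : k ≤ 2) {σ : Perm (Fin (n + 1))}
    (hσ : IsKConvex k σ) :
    ∃ π : Perm (Fin n), IsKConvex k π ∧ (insertMin 0 π = σ ∨ insertMin (last n) π = σ) := by
  obtain ⟨p, π, rfl⟩ := exists_insertMin_eq σ
  rcases hσ.eq_zero_or_eq_last_of_apply_eq_zero hk (insertMin p π).injective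
    (insertMin_apply_self p π) with rfl | rfl
  · exact ⟨π, hσ.of_insertMin_zero, .inl rfl⟩
  · exact ⟨π, hσ.of_insertMin_last, .inr rfl⟩

theorem fk_le_fk_succ (hk1 : 1 ≤ k) (hk2 : k ≤ 2) : fk k n ≤ fk k (n + 1) := by
  choose p hp using fun π : {π : Perm (Fin n) // IsKConvex k π} => π.2.exists_insertMin hk1 hk2
  refine Nat.card_le_card_of_injective
    (fun π => (⟨insertMin (p π) π, hp π⟩ : {σ : Perm (Fin (n + 1)) // IsKConvex k σ})) ?_
  exact fun π τ h => Subtype.ext (insertMin_injective2 (congrArg Subtype.val h)).2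

theorem fk_succ_le_two_mul (hk : k ≤ 2) : fk k (n + 1) ≤ 2 * fk k n := by
  let C (m : ℕ) : Set (Perm (Fin m)) := {π | IsKConvex k π}
  have hcover : C (n + 1) ⊆ insertMin 0 '' C n ∪ insertMin (last n) '' C n := by
    intro σ hσ
    obtain ⟨π, hπ, h | h⟩ := IsKConvex.exists_eq_insertMin_end hk hσ
    · exact .inl ⟨π, hπ, h⟩
    · exact .inr ⟨π, hπ, h⟩
  calc (C (n + 1)).ncard
    _ ≤ (insertMin 0 '' C n ∪ insertMin (last n) '' C n).ncard := Set.ncard_le_ncard hcover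
    _ ≤ (insertMin 0 '' C n).ncard + (insertMin (last n) '' C n).ncard := Set.ncard_union_le _ _
    _ ≤ (C n).ncard + (C n).ncard := Nat.add_le_add Set.ncard_image_le Set.ncard_image_le
    _ = 2 * (C n).ncard := (two_mul _).symm

end Growth

/-- for `k ∈ {1, 2}` and `n ≥ 1`, `f_k(n) ≤ f_k(n+1) ≤ 2·f_k(n)`. -/
theorem kconvex_perm_growth (k : ℕ) (hk : k = 1 ∨ k = 2) (n : ℕ) (hn : 1 ≤ n) :
    fk k n ≤ fk k (n + 1) ∧ fk k (n + 1) ≤ 2 * fk k n :=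
  ⟨fk_le_fk_succ (by lia) (by lia), fk_succ_le_two_mul (by lia)⟩
end

section
/- Let k ∈ {0, 1, 2}, let n ≥ 4, and let π be a k-convex permutation of [n]. Then exactly one of the following six conditions holds: (i) π(1) = 1 and π(2) = 2; (ii) π(n) = 1 and π(n−1) = 2; (iii) π(1) = 1 and π(2) = 3; (iv) π(n) = 1 and π(n−1) = 3; (v) π(1) = 2 and π(2) = 3; (vi) π(n) = 2 and π(n−1) = 3. -/
open Set Function

/-- The condition, for a sequence without repetitions, of being unimodal (increasing, then
decreasing), encoded locally: every interior entry exceeds one of its two neighbours. -/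
def HasNoValley {n : ℕ} {α : Type*} [LT α] (f : Fin n → α) : Prop :=
  ∀ i j l : Fin n, (i : ℕ) + 1 = j → (j : ℕ) + 1 = l → f i < f j ∨ f l < f j

theorem IsKConvex.hasNoValley {k n p : ℕ} {f : Fin n → Fin p} (hf : IsKConvex k f) (hk : k ≤ 2)
    (hinj : Injective f) : HasNoValley f := by
  intro i j l hij hjl
  by_contra! hvalley
  have apart {x y : Fin n} (hxy : (x : ℕ) ≠ y) : (f x : ℕ) ≠ f y :=
    fun h => hxy (congrArg Fin.val (hinj (Fin.ext h)))
  have hi : (f j : ℕ) < f i := lt_of_le_of_ne hvalley.1 (apart (by omega))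
  have hl : (f j : ℕ) < f l := lt_of_le_of_ne hvalley.2 (apart (by omega))
  have hil : (f i : ℕ) ≠ f l := apart (by omega)
  have hconv := hf i j l hij hjl
  omega

namespace HasNoValley

variable {n : ℕ} {α : Type*} [Preorder α] {f : Fin n → α}

theorem val_eq_or_val_eq_of_isMinOn (hf : HasNoValley f) {s : Set (Fin n)} {x : Fin n} {a b : ℕ}
    (hmin : IsMinOn f s x) (hb : b < n) (hax : a ≤ x) (hxb : x ≤ b)
    (hs : ∀ y : Fin n, a ≤ y → y ≤ b → y ∈ s) : (x : ℕ) = a ∨ (x : ℕ) = b := by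
  by_contra! ⟨hxa, hxb'⟩
  let i : Fin n := ⟨x - 1, by omega⟩
  let l : Fin n := ⟨x + 1, by omega⟩
  have hi : f x ≤ f i := hmin (hs i (by simp only [i]; omega) (by simp only [i]; omega))
  have hl : f x ≤ f l := hmin (hs l (by simp only [l]; omega) (by simp only [l]; omega))
  rcases hf i x l (Nat.sub_add_cancel (by omega)) rfl with h | h
  · exact hi.not_gt h
  · exact hl.not_gt h

theorem two_of_three_least_at_same_end (hf : HasNoValley f) {p q r : Fin n}
    (hqp : q ≠ p) (hrp : r ≠ p) (hrq : r ≠ q)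
    (hp : IsMinOn f univ p) (hq : IsMinOn f {p}ᶜ q) (hr : IsMinOn f {p, q}ᶜ r) :
    ((p : ℕ) = 0 ∧ (q : ℕ) = 1) ∨ ((p : ℕ) = n - 1 ∧ (q : ℕ) = n - 2) ∨
    ((p : ℕ) = 0 ∧ (r : ℕ) = 1) ∨ ((p : ℕ) = n - 1 ∧ (r : ℕ) = n - 2) ∨
    ((q : ℕ) = 0 ∧ (r : ℕ) = 1) ∨ ((q : ℕ) = n - 1 ∧ (r : ℕ) = n - 2) := by
  have ne_p (y : Fin n) (hy : (y : ℕ) ≠ p) : y ∈ ({p}ᶜ : Set (Fin n)) := by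
    simpa [Fin.ext_iff] using hy
  have ne_pq (y : Fin n) (hyp : (y : ℕ) ≠ p) (hyq : (y : ℕ) ≠ q) :
      y ∈ ({p, q}ᶜ : Set (Fin n)) := by
    simpa [Fin.ext_iff] using And.intro hyp hyq
  rw [Ne, Fin.ext_iff] at hqp hrp hrq
  have third (hpq : (p : ℕ) = 0 ∧ (q : ℕ) = n - 1 ∨ (p : ℕ) = n - 1 ∧ (q : ℕ) = 0) :
      (r : ℕ) = 1 ∨ (r : ℕ) = n - 2 :=
    hf.val_eq_or_val_eq_of_isMinOn hr (by omega) (by omega) (by omega)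
      fun y _ _ => ne_pq y (by omega) (by omega)
  obtain hp0 | hp0 : (p : ℕ) = 0 ∨ (p : ℕ) = n - 1 :=
    hf.val_eq_or_val_eq_of_isMinOn hp (by omega) (by omega) (by omega) fun _ _ _ => mem_univ _
  · have hq_end : (q : ℕ) = 1 ∨ (q : ℕ) = n - 1 :=
      hf.val_eq_or_val_eq_of_isMinOn hq (by omega) (by omega) (by omega)
        fun y _ _ => ne_p y (by omega)
    omega
  · have hq_end : (q : ℕ) = 0 ∨ (q : ℕ) = n - 2 :=
      hf.val_eq_or_val_eq_of_isMinOn hq (by omega) (by omega) (by omega)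
        fun y _ _ => ne_p y (by omega)
    omega

end HasNoValley

/-- The six patterns allowed at the two ends of a sequence, in terms of its first, second,
penultimate and last entries. Values start at `0`, so that `0, 1, 2` are the values `1, 2, 3` of the
usual notation for permutations. -/
def EndpointPattern (first second penultimate last : ℕ) : Fin 6 → Prop :=
  ![first = 0 ∧ second = 1, last = 0 ∧ penultimate = 1,
    first = 0 ∧ second = 2, last = 0 ∧ penultimate = 2,
    first = 1 ∧ second = 2, last = 1 ∧ penultimate = 2]

theorem EndpointPattern.unique {a b c d : ℕ} (hac : a ≠ c) (had : a ≠ d) (hbc : b ≠ c)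
    (hbd : b ≠ d) {i j : Fin 6} (hi : EndpointPattern a b c d i) (hj : EndpointPattern a b c d j) :
    i = j := by
  -- Two different patterns give two values to one position or one value to two positions.
  fin_cases i <;> fin_cases j <;>
    first
    | rfl
    | obtain ⟨hi₁, hi₂⟩ := hi
      obtain ⟨hj₁, hj₂⟩ := hj
      exfalso
      omega

theorem HasNoValley.exists_endpointPattern {n : ℕ} (hn : 2 ≤ n) {f : Fin n → ℕ}
    (hf : HasNoValley f) (hinj : Injective f) (hrange : Iic 2 ⊆ range f) :
    ∃ j, EndpointPattern (f ⟨0, by omega⟩) (f ⟨1, by omega⟩) (f ⟨n - 2, by omega⟩)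
      (f ⟨n - 1, by omega⟩) j := by
  obtain ⟨p, hp⟩ : 0 ∈ range f := hrange (by simp)
  obtain ⟨q, hq⟩ : 1 ∈ range f := hrange (by simp)
  obtain ⟨r, hr⟩ : 2 ∈ range f := hrange (by simp)
  have ne_zero {y : Fin n} (hy : y ≠ p) : f y ≠ 0 := hp ▸ hinj.ne hy
  have ne_one {y : Fin n} (hy : y ≠ q) : f y ≠ 1 := hq ▸ hinj.ne hy
  have hqp : q ≠ p := by rintro rfl; omega
  have hrp : r ≠ p := by rintro rfl; omega
  have hrq : r ≠ q := by rintro rfl; omega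
  have hpmin : IsMinOn f univ p := fun y _ => by simp [hp]
  have hqmin : IsMinOn f {p}ᶜ q := fun y hy => by
    have := ne_zero hy
    change f q ≤ f y
    omega
  have hrmin : IsMinOn f {p, q}ᶜ r := fun y hy => by
    have := ne_zero fun h => hy (Or.inl h)
    have := ne_one fun h => hy (Or.inr h)
    change f r ≤ f y
    omega
  have value_at {x : Fin n} {i v : ℕ} (hx : f x = v) (hxi : (x : ℕ) = i) (hi : i < n) :
      f ⟨i, hi⟩ = v := by
    subst hxi; exact hx
  rcases hf.two_of_three_least_at_same_end hqp hrp hrq hpmin hqmin hrmin with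
    ⟨h, h'⟩ | ⟨h, h'⟩ | ⟨h, h'⟩ | ⟨h, h'⟩ | ⟨h, h'⟩ | ⟨h, h'⟩
  · exact ⟨0, value_at hp h _, value_at hq h' _⟩
  · exact ⟨1, value_at hp h _, value_at hq h' _⟩
  · exact ⟨2, value_at hp h _, value_at hr h' _⟩
  · exact ⟨3, value_at hp h _, value_at hr h' _⟩
  · exact ⟨4, value_at hq h _, value_at hr h' _⟩
  · exact ⟨5, value_at hq h _, value_at hr h' _⟩

theorem kconvex_endpoints_general {n : ℕ} (hn : 4 ≤ n) {f : Fin n → ℕ} (hf : HasNoValley f)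
    (hinj : Injective f) (hrange : Iic 2 ⊆ range f) :
    ∃! j, EndpointPattern (f ⟨0, by omega⟩) (f ⟨1, by omega⟩) (f ⟨n - 2, by omega⟩)
      (f ⟨n - 1, by omega⟩) j := by
  have apart {x y : Fin n} (hxy : (x : ℕ) ≠ y) : f x ≠ f y := hinj.ne (Fin.ne_of_val_ne hxy)
  refine existsUnique_of_exists_of_unique (hf.exists_endpointPattern (by omega) hinj hrange) ?_
  intro i j
  apply EndpointPattern.unique <;> exact apart (by dsimp only; omega)

/-- for `k ∈ {0,1,2}`, `n ≥ 4`, and a `k`-convex permutation `π` of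
`[n]`, exactly one of the six conditions holds: `π` begins with `12`, `13`, or `23`,
or ends with `21`, `31`, or `32` (conditions stated on the first two or last two
entries, 1-indexed values shifted down by one). -/
theorem kconvex_endpoints (k : ℕ) (hk : k ≤ 2) (n : ℕ) (hn : 4 ≤ n)
    (π : Equiv.Perm (Fin n)) (hπ : IsKConvex k ⇑π) :
    ∃! j : Fin 6,
      ![ (π ⟨0, by omega⟩ : ℕ) = 0 ∧ (π ⟨1, by omega⟩ : ℕ) = 1,
         (π ⟨n - 1, by omega⟩ : ℕ) = 0 ∧ (π ⟨n - 2, by omega⟩ : ℕ) = 1,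
         (π ⟨0, by omega⟩ : ℕ) = 0 ∧ (π ⟨1, by omega⟩ : ℕ) = 2,
         (π ⟨n - 1, by omega⟩ : ℕ) = 0 ∧ (π ⟨n - 2, by omega⟩ : ℕ) = 2,
         (π ⟨0, by omega⟩ : ℕ) = 1 ∧ (π ⟨1, by omega⟩ : ℕ) = 2,
         (π ⟨n - 1, by omega⟩ : ℕ) = 1 ∧ (π ⟨n - 2, by omega⟩ : ℕ) = 2 ] j := by
  exact kconvex_endpoints_general hn (f := fun i => π i) (hπ.hasNoValley hk π.injective)
    (Fin.val_injective.comp π.injective) fun v (hv : v ≤ 2) => ⟨π.symm ⟨v, by omega⟩, by simp⟩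
end

section
/- The number f_0(n) of 0-convex permutations of [n] satisfies: f_0(1) = 1, f_0(2) = 2, f_0(3) = 4, f_0(4) = 6, and f_0(n) = 8 for every n ≥ 5. -/
/-!
A `0`-convex permutation is a concave sequence. On an interval of positions a concave sequence is
smallest at an endpoint, so the values `0, 1, 2, 3` are placed one after the other at the left or
right end of the positions still free. Up to reversal `0` comes first, and at most three further
choices occur. Once they are made, the tangent lines of the sequence near its ends bound it above
by an explicit permutation, which it must then equal: pointwise comparable permutations coincide.
-/

open Equiv

theorem perm_eq_of_forall_le {α : Type*} [PartialOrder α] [Finite α] {π σ : Perm α}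
    (h : ∀ x, π x ≤ σ x) : π = σ := by
  have id_le : id ≤ ⇑(σ * π⁻¹) := fun x => by simpa using h (π⁻¹ x)
  obtain ⟨m, hm, hpow⟩ := (isOfFinOrder_of_finite (σ * π⁻¹)).exists_pow_eq_one
  have iterate_eq : (⇑(σ * π⁻¹))^[m] = id := by rw [Perm.iterate_eq_pow, hpow, Perm.coe_one]
  have le_id : ⇑(σ * π⁻¹) ≤ id := iterate_eq ▸ Function.monotone_iterate_of_id_le id_le hm
  have eq_one : σ * π⁻¹ = 1 := Equiv.coe_inj.mp (le_antisymm le_id id_le)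
  exact (mul_inv_eq_one.mp eq_one).symm

namespace IsKConvex

variable {k n p : ℕ} {f : Fin n → Fin p}

instance : Decidable (IsKConvex k f) := by
  unfold IsKConvex; infer_instance

theorem comp_rev_s12 (hf : IsKConvex k f) : IsKConvex k (f ∘ Fin.rev) := by
  intro i j l hij hjl
  have := hf l.rev j.rev i.rev (by simp only [Fin.val_rev]; omega)
    (by simp only [Fin.val_rev]; omega)
  simp only [Function.comp_apply]
  linarith

theorem mul_revPerm {π : Perm (Fin n)} (hπ : IsKConvex k π) :
    IsKConvex k ⇑(π * (Fin.revPerm : Perm (Fin n))) :=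
  hπ.comp_rev_s12

theorem slope_le (hf : IsKConvex k f) {i j : ℕ} (hij : i ≤ j) (hj : j + 1 < n) :
    (f ⟨j + 1, hj⟩ : ℤ) - (f ⟨j, by omega⟩ : ℤ) ≤
      (f ⟨i + 1, by omega⟩ : ℤ) - (f ⟨i, by omega⟩ : ℤ) + k * (j - i) := by
  induction j, hij using Nat.le_induction with
  | base => simp
  | succ j hij ih =>
    have hstep := hf ⟨j, by omega⟩ ⟨j + 1, by omega⟩ ⟨j + 2, hj⟩ rfl rfl
    have hslope := ih (by omega)
    push_cast
    linarith

-- The right-hand side is twice the quadratic with second difference `k` that agrees with `f` at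
-- `i` and `i + 1`.
theorem two_mul_le_parabola_of_le (hf : IsKConvex k f) {i x : ℕ} (hix : i ≤ x)
    (hi : i + 1 < n) (hx : x < n) :
    2 * (f ⟨x, hx⟩ : ℤ) ≤ 2 * (f ⟨i, by omega⟩ : ℤ) +
      2 * (x - i) * ((f ⟨i + 1, hi⟩ : ℤ) - (f ⟨i, by omega⟩ : ℤ)) + k * (x - i) * (x - i - 1) := by
  induction x, hix using Nat.le_induction with
  | base => simp
  | succ x hix ih =>
    have hslope := hf.slope_le hix hx
    have hprev := ih (by omega)
    push_cast
    linarith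

theorem two_mul_le_parabola_of_ge (hf : IsKConvex k f) {i x : ℕ} (hxi : x ≤ i) (hi : i + 1 < n) :
    2 * (f ⟨x, by omega⟩ : ℤ) ≤ 2 * (f ⟨i, by omega⟩ : ℤ) +
      2 * (x - i) * ((f ⟨i + 1, hi⟩ : ℤ) - (f ⟨i, by omega⟩ : ℤ)) + k * (x - i) * (x - i - 1) := by
  induction hxi using Nat.decreasingInduction with
  | self => simp
  | of_succ x hxi ih =>
    have hslope := hf.slope_le hxi.le hi
    push_cast at ih
    linarith

theorem le_tangent (hf : IsKConvex 0 f) {i j : Fin n} (hij : (i : ℕ) + 1 = j) (x : Fin n) :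
    (f x : ℤ) ≤ (f i : ℤ) + (x - i) * ((f j : ℤ) - (f i : ℤ)) := by
  obtain ⟨i, hi⟩ := i
  obtain ⟨_, hj⟩ := j
  obtain rfl := hij
  rcases le_total i x with hix | hxi
  · have := hf.two_mul_le_parabola_of_le hix hj x.2
    push_cast at this
    linarith
  · have := hf.two_mul_le_parabola_of_ge hxi hj
    push_cast at this
    linarith

theorem min_le_of_mem_Icc (hf : IsKConvex 0 f) {i j l : Fin n} (hj : j ∈ Set.Icc i l) :
    min (f i) (f l) ≤ f j := by
  obtain ⟨hij, hjl⟩ := hj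
  rcases hjl.eq_or_lt with rfl | hjl
  · exact min_le_right _ _
  have tangent := hf.le_tangent (i := j) (j := ⟨j + 1, by omega⟩) rfl
  rw [min_le_iff, Fin.le_def, Fin.le_def]
  rcases le_total 0 ((f ⟨j + 1, by omega⟩ : ℤ) - (f j : ℤ)) with hslope | hslope
  · left
    have := mul_nonpos_of_nonpos_of_nonneg (a := (i : ℤ) - j) (by omega) hslope
    linarith [tangent i]
  · right
    have := mul_nonpos_of_nonneg_of_nonpos (a := (l : ℤ) - j) (by omega) hslope
    linarith [tangent l]

end IsKConvex

/-- The values smaller than `a + c` occupy the first `a` and the last `c` positions of `π`: the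
state of a permutation whose values are placed in increasing order at the ends of the free
positions. -/
def FillsEnds {n : ℕ} (π : Perm (Fin n)) (a c : ℕ) : Prop :=
  ∀ i : Fin n, a + c ≤ (π i : ℕ) ↔ a ≤ (i : ℕ) ∧ (i : ℕ) + c < n

namespace FillsEnds

variable {n a c : ℕ} {π : Perm (Fin n)} {x y : Fin n}

theorem zero (π : Perm (Fin n)) : FillsEnds π 0 0 := fun i => by simp

theorem succ_left (h : FillsEnds π a c) (hx : (x : ℕ) = a) (hπx : (π x : ℕ) = a + c) :
    FillsEnds π (a + 1) c := by
  intro i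
  have hi := h i
  have hne : (π i : ℕ) = π x ↔ (i : ℕ) = x := by simp only [Fin.val_inj, π.injective.eq_iff]
  omega

theorem succ_right (h : FillsEnds π a c) (hy : (y : ℕ) + c + 1 = n) (hπy : (π y : ℕ) = a + c) :
    FillsEnds π a (c + 1) := by
  intro i
  have hi := h i
  have hne : (π i : ℕ) = π y ↔ (i : ℕ) = y := by simp only [Fin.val_inj, π.injective.eq_iff]
  omega

theorem apply_eq_or_apply_eq (h : FillsEnds π a c) (hπ : IsKConvex 0 π) (hx : (x : ℕ) = a)
    (hy : (y : ℕ) + c + 1 = n) (hxy : x ≤ y) : (π x : ℕ) = a + c ∨ (π y : ℕ) = a + c := by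
  have hxv : a + c ≤ (π x : ℕ) := (h x).2 (by omega)
  have hyv : a + c ≤ (π y : ℕ) := (h y).2 (by omega)
  obtain ⟨i, hi⟩ := π.surjective ⟨a + c, by omega⟩
  have hiv : (π i : ℕ) = a + c := congrArg Fin.val hi
  have hmem := (h i).1 hiv.ge
  have hmin := hπ.min_le_of_mem_Icc (i := x) (j := i) (l := y) ⟨by omega, by omega⟩
  rw [min_le_iff, Fin.le_def, Fin.le_def] at hmin
  omega

end FillsEnds

theorem IsKConvex.placement_of_apply_zero {n : ℕ} {π : Perm (Fin n)} (hπ : IsKConvex 0 π)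
    {l₀ l₁ l₂ r₁ r₀ : Fin n} (hl₀ : (l₀ : ℕ) = 0) (hl₁ : (l₁ : ℕ) = 1) (hl₂ : (l₂ : ℕ) = 2)
    (hr₁ : (r₁ : ℕ) + 2 = n) (hr₀ : (r₀ : ℕ) + 1 = n) (hn : 4 ≤ n) (h₀ : (π l₀ : ℕ) = 0) :
    (π l₁ : ℕ) = 1 ∨
      (π r₀ : ℕ) = 1 ∧ ((π r₁ : ℕ) = 2 ∨ (π l₁ : ℕ) = 2 ∧ ((π l₂ : ℕ) = 3 ∨ (π r₁ : ℕ) = 3)) := by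
  have fill₁ := (FillsEnds.zero π).succ_left hl₀ h₀
  refine (fill₁.apply_eq_or_apply_eq hπ hl₁ hr₀ (by omega)).imp_right fun h₁ => ⟨h₁, ?_⟩
  have fill₂ := fill₁.succ_right hr₀ h₁
  refine (fill₂.apply_eq_or_apply_eq hπ hl₁ hr₁ (by omega)).symm.imp_right fun h₂ => ⟨h₂, ?_⟩
  have fill₃ := fill₂.succ_left hl₁ h₂
  exact fill₃.apply_eq_or_apply_eq hπ hl₂ hr₁ (by omega)

/-- For `n ≥ 5`, the four `0`-convex permutations of `{0, …, n - 1}` starting with `0`, as functions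
on `ℕ` that are meaningful below `n`: `0, 1, 2, …`, then `0, n - 1, …, 2, 1`, then
`0, 2, 3, …, n - 1, 1`, then `0, 2, 4, …, 5, 3, 1`. -/
def shape (n : ℕ) (c : Fin 4) (i : ℕ) : ℕ :=
  match c with
  | 0 => i
  | 1 => if i = 0 then 0 else n - i
  | 2 => if i = 0 then 0 else if i + 1 = n then 1 else i + 1
  | 3 => if 2 * i < n then 2 * i else 2 * (n - 1 - i) + 1

theorem shape_lt {n i : ℕ} (c : Fin 4) (hi : i < n) : shape n c i < n := by
  fin_cases c <;> simp only [shape] <;> grind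

theorem shape_injOn (n : ℕ) (c : Fin 4) : Set.InjOn (shape n c) (Set.Iio n) := by
  intro i hi j hj hij
  rw [Set.mem_Iio] at hi hj
  fin_cases c <;> simp only [shape] at hij <;> grind

theorem shape_add_shape_le {n i : ℕ} (c : Fin 4) (hi : i + 2 < n) :
    shape n c i + shape n c (i + 2) ≤ 2 * shape n c (i + 1) := by
  fin_cases c <;> simp only [shape] <;> grind

/-- The permutation of `Fin n` given by `shape n c`. -/
noncomputable def shapePerm (n : ℕ) (c : Fin 4) : Perm (Fin n) :=
  ofBijective (fun i => ⟨shape n c i, shape_lt c i.2⟩) <| Finite.injective_iff_bijective.mp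
    fun i j hij => Fin.ext (shape_injOn n c i.2 j.2 (congrArg Fin.val hij))

@[simp]
theorem val_shapePerm_apply {n : ℕ} (c : Fin 4) (i : Fin n) :
    (shapePerm n c i : ℕ) = shape n c i := rfl

theorem isKConvex_shapePerm (n : ℕ) (c : Fin 4) : IsKConvex 0 (shapePerm n c) := by
  intro i j l hij hjl
  have := shape_add_shape_le (n := n) (i := i) c (by omega)
  simp only [val_shapePerm_apply, ← hjl, ← hij, add_assoc, Nat.reduceAdd]
  push_cast
  omega

theorem shapePerm_injective {n : ℕ} (hn : 5 ≤ n) : Function.Injective (shapePerm n) := by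
  intro c d hcd
  have hval (i : Fin n) : shape n c i = shape n d i := by
    rw [← val_shapePerm_apply, hcd, val_shapePerm_apply]
  have hsecond := hval ⟨1, by omega⟩
  have hpenult := hval ⟨n - 2, by omega⟩
  fin_cases c <;> fin_cases d <;> simp only [shape] at hsecond hpenult <;> grind

theorem shapePerm_ne_shapePerm_mul_revPerm {n : ℕ} (hn : 2 ≤ n) (c d : Fin 4) :
    shapePerm n c ≠ shapePerm n d * Fin.revPerm := by
  intro h
  have hval : shape n c 0 = shape n d (n - 1) := by
    simpa using congrArg Fin.val (Perm.congr_fun h ⟨0, by omega⟩)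
  fin_cases c <;> fin_cases d <;> simp only [shape] at hval <;> grind

theorem IsKConvex.mem_range_shapePerm {n : ℕ} (hn : 4 ≤ n) {π : Perm (Fin n)}
    (hπ : IsKConvex 0 π) {l₀ : Fin n} (hl₀ : (l₀ : ℕ) = 0) (h₀ : (π l₀ : ℕ) = 0) :
    π ∈ Set.range (shapePerm n) := by
  suffices h : ∃ c, ∀ x : Fin n, (π x : ℕ) ≤ shape n c x by
    obtain ⟨c, hc⟩ := h
    exact ⟨c, (perm_eq_of_forall_le hc).symm⟩
  obtain ⟨l₁, hl₁⟩ : ∃ l : Fin n, (l : ℕ) = 1 := ⟨⟨1, by omega⟩, rfl⟩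
  obtain ⟨l₂, hl₂⟩ : ∃ l : Fin n, (l : ℕ) = 2 := ⟨⟨2, by omega⟩, rfl⟩
  obtain ⟨r₁, hr₁⟩ : ∃ r : Fin n, (r : ℕ) + 2 = n := ⟨⟨n - 2, by omega⟩, by grind⟩
  obtain ⟨r₀, hr₀⟩ : ∃ r : Fin n, (r : ℕ) + 1 = n := ⟨⟨n - 1, by omega⟩, by grind⟩
  have left_line := hπ.le_tangent (i := l₀) (j := l₁) (by omega)
  have right_line := hπ.le_tangent (i := r₁) (j := r₀) (by omega)
  rcases hπ.placement_of_apply_zero hl₀ hl₁ hl₂ hr₁ hr₀ hn h₀ with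
    h₁ | ⟨h₁, h₂ | ⟨h₂, h₃ | h₃⟩⟩
  · rw [h₀, h₁] at left_line
    exact ⟨0, fun x => by grind [shape]⟩
  · rw [h₁, h₂] at right_line
    exact ⟨1, fun x => by grind [shape]⟩
  · have inner_line := hπ.le_tangent (i := l₁) (j := l₂) (by omega)
    rw [h₂, h₃] at inner_line
    exact ⟨2, fun x => by grind [shape]⟩
  · rw [h₀, h₂] at left_line
    rw [h₁, h₃] at right_line
    exact ⟨3, fun x => by grind [shape]⟩

theorem setOf_isKConvex_zero_eq_range {n : ℕ} (hn : 4 ≤ n) :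
    {π : Perm (Fin n) | IsKConvex 0 π} =
      Set.range (Sum.elim (shapePerm n) (shapePerm n · * Fin.revPerm)) := by
  have rev_mul_rev : (Fin.revPerm : Perm (Fin n)) * Fin.revPerm = 1 := by ext; simp
  refine Set.Subset.antisymm (fun π (hπ : IsKConvex 0 π) => ?_) ?_
  · rw [Set.Sum.elim_range]
    obtain ⟨l₀, hl₀⟩ : ∃ l : Fin n, (l : ℕ) = 0 := ⟨⟨0, by omega⟩, rfl⟩
    rcases (FillsEnds.zero π).apply_eq_or_apply_eq hπ hl₀ (y := l₀.rev)
      (by rw [Fin.val_rev]; omega) (by omega) with hleft | hright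
    · exact .inl (hπ.mem_range_shapePerm hn hl₀ hleft)
    · obtain ⟨c, hc⟩ := hπ.mul_revPerm.mem_range_shapePerm hn hl₀ hright
      exact .inr ⟨c, by simp only [hc, mul_assoc, rev_mul_rev, mul_one]⟩
  · rintro _ ⟨c | c, rfl⟩
    · exact isKConvex_shapePerm n c
    · exact (isKConvex_shapePerm n c).mul_revPerm

theorem fk_zero_eq_eight {n : ℕ} (hn : 5 ≤ n) : fk 0 n = 8 := by
  have hinj : Function.Injective (Sum.elim (shapePerm n) (shapePerm n · * Fin.revPerm)) :=
    (shapePerm_injective hn).sumElim ((mul_left_injective _).comp (shapePerm_injective hn))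
      (shapePerm_ne_shapePerm_mul_revPerm (by omega))
  calc fk 0 n
      = Nat.card {π : Perm (Fin n) | IsKConvex 0 π} := rfl
    _ = Nat.card (Fin 4 ⊕ Fin 4) := by
      rw [setOf_isKConvex_zero_eq_range (by omega), Nat.card_range_of_injective hinj]
    _ = 8 := by simp

/-- `f_0(1) = 1`, `f_0(2) = 2`, `f_0(3) = 4`, `f_0(4) = 6`, and
`f_0(n) = 8` for every `n ≥ 5`. -/
theorem perfectly_convex_count :
    fk 0 1 = 1 ∧ fk 0 2 = 2 ∧ fk 0 3 = 4 ∧ fk 0 4 = 6 ∧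
    ∀ n : ℕ, 5 ≤ n → fk 0 n = 8 := by
  refine ⟨?_, ?_, ?_, ?_, fun n => fk_zero_eq_eight⟩ <;> rw [fk, Nat.card_eq_fintype_card] <;>
    decide +kernel
end

section
/- For k ∈ {1, 2}, the limit C_k := lim_{n→∞} f_k(n)^{1/n} exists and is a finite real number, and f_k(n) = Θ(C_k^n); that is, there exist positive real constants c₁ and c₂ such that c₁ · C_k^n ≤ f_k(n) ≤ c₂ · C_k^n for all n ≥ 1. -/
open Filter

/-!
For `k ≤ 2` the minimum of a `k`-convex list sits at one of its ends, so a `k`-convex permutation is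
built by placing `0, 1, 2, …` in turn, each next to one of two blocks growing inwards from the two
ends. How this can continue depends only on three slacks, and the number `T(n; state)` of
continuations is monotone in them; hence it is at most the number `F(n)` for infinite slacks, and
`F(m + n) ≤ F(m) * F(n)`. Conversely, three changes of side lead from every state to one and the
same tight state, and for `k = 1, 2` the tight count satisfies a recursion that bounds `F` by a
constant multiple of it. So `F(n) ≤ K * T(n; state)` for every state, which gives `F(m) * F(n) ≤ K *
F(m + n)`, and Fekete's lemma applied to `log F` and to `log K - log F` gives `F(n) = Θ(Cⁿ)`.
The parameter `κ` is `k - 1`.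
-/

/-! ### Quasi-multiplicative sequences -/

theorem bddBelow_div_of_subadditive_const_sub {u : ℕ → ℝ} {L : ℝ} (hu : Subadditive u)
    (hL : Subadditive fun n ↦ L - u n) : BddBelow (Set.range fun n ↦ u n / n) := by
  refine ⟨-|L - u 1|, ?_⟩
  rintro _ ⟨n, rfl⟩
  rcases n.eq_zero_or_pos with rfl | hn
  · simp
  have hn : (0 : ℝ) < n := by exact_mod_cast hn
  have hupper : L - u n ≤ n * (L - u 1) + (L - u 0) := by
    simpa using hL.apply_mul_add_le n 1 0
  have hu0 : 0 ≤ u 0 := by linarith [hu 0 0]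
  rw [le_div_iff₀ hn]
  nlinarith [le_abs_self (L - u 1)]

theorem exists_linear_bounds_of_subadditive {u : ℕ → ℝ} {L : ℝ} (hu : Subadditive u)
    (hL : Subadditive fun n ↦ L - u n) : ∃ r : ℝ, ∀ n : ℕ, n * r ≤ u n ∧ u n ≤ n * r + L := by
  have hu_bdd := bddBelow_div_of_subadditive_const_sub hu hL
  have hL_bdd := bddBelow_div_of_subadditive_const_sub (L := L) hL (by simpa using hu)
  have hlim : hL.lim = -hu.lim := by
    refine tendsto_nhds_unique (hL.tendsto_lim hL_bdd) ?_
    simpa [sub_div] using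
      (tendsto_const_div_atTop_nhds_zero_nat L).sub (hu.tendsto_lim hu_bdd)
  refine ⟨hu.lim, fun n ↦ ?_⟩
  rcases n.eq_zero_or_pos with rfl | hn
  · have hu0 := hu 0 0
    have hL0 := hL 0 0
    simp only [add_zero, CharP.cast_eq_zero, zero_mul, zero_add] at hu0 hL0 ⊢
    constructor <;> linarith
  have hlower := hu.lim_le_div hu_bdd hn.ne'
  have hupper := hL.lim_le_div hL_bdd hn.ne'
  have hn : (0 : ℝ) < n := by exact_mod_cast hn
  rw [le_div_iff₀ hn] at hlower hupper
  rw [hlim] at hupper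
  constructor <;> linarith

theorem exists_pow_bounds_of_quasi_multiplicative {a : ℕ → ℝ} {K : ℝ} (ha : ∀ n, 0 < a n)
    (hK : 0 < K) (hle : ∀ m n, a (m + n) ≤ a m * a n) (hge : ∀ m n, a m * a n ≤ K * a (m + n)) :
    ∃ C : ℝ, 0 < C ∧ ∀ n, C ^ n ≤ a n ∧ a n ≤ K * C ^ n := by
  have hlog : Subadditive fun n ↦ Real.log (a n) := fun m n ↦ by
    rw [← Real.log_mul (ha m).ne' (ha n).ne']
    exact Real.log_le_log (ha _) (hle m n)
  have hlog_sub : Subadditive fun n ↦ Real.log K - Real.log (a n) := fun m n ↦ by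
    have := Real.log_le_log (mul_pos (ha m) (ha n)) (hge m n)
    rw [Real.log_mul (ha m).ne' (ha n).ne', Real.log_mul hK.ne' (ha _).ne'] at this
    linarith
  obtain ⟨r, hr⟩ := exists_linear_bounds_of_subadditive hlog hlog_sub
  refine ⟨Real.exp r, Real.exp_pos r, fun n ↦ ?_⟩
  obtain ⟨hlower, hupper⟩ := hr n
  rw [← Real.exp_nat_mul]
  constructor
  · exact (Real.le_log_iff_exp_le (ha n)).1 hlower
  · rw [Real.log_le_iff_le_exp (ha n), Real.exp_add, Real.exp_log hK] at hupper
    rwa [mul_comm]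

theorem tendsto_const_mul_pow_rpow_one_div {c C : ℝ} (hc : 0 < c) (hC : 0 ≤ C) :
    Tendsto (fun n : ℕ ↦ (c * C ^ n) ^ (1 / (n : ℝ))) atTop (nhds C) := by
  have hroot : Tendsto (fun n : ℕ ↦ c ^ (1 / (n : ℝ)) * C) atTop (nhds (c ^ (0 : ℝ) * C)) :=
    ((Real.continuousAt_const_rpow hc.ne').tendsto.comp
      tendsto_one_div_atTop_nhds_zero_nat).mul_const C
  rw [Real.rpow_zero, one_mul] at hroot
  refine hroot.congr' ?_
  filter_upwards [eventually_ne_atTop 0] with n hn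
  rw [Real.mul_rpow hc.le (by positivity), one_div, Real.pow_rpow_inv_natCast hC hn]

theorem tendsto_rpow_one_div_of_pow_bounds {f : ℕ → ℝ} {c₁ c₂ C : ℝ} (hc₁ : 0 < c₁)
    (hc₂ : 0 < c₂) (hC : 0 ≤ C) (hf : ∀ᶠ n in atTop, c₁ * C ^ n ≤ f n ∧ f n ≤ c₂ * C ^ n) :
    Tendsto (fun n : ℕ ↦ f n ^ (1 / (n : ℝ))) atTop (nhds C) := by
  refine tendsto_of_tendsto_of_tendsto_of_le_of_le' (tendsto_const_mul_pow_rpow_one_div hc₁ hC)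
    (tendsto_const_mul_pow_rpow_one_div hc₂ hC) ?_ ?_ <;>
  filter_upwards [hf] with n hn
  · exact Real.rpow_le_rpow (by positivity) hn.1 (by positivity)
  · exact Real.rpow_le_rpow (le_trans (by positivity) hn.1) hn.2 (by positivity)

/-! ### Counting the completions of a partial arrangement -/

/-- The number of ways to complete a partially built `(κ + 1)`-convex permutation in which the
values are placed in increasing order, each next to one of two blocks growing inwards from the two
ends; `n + 1` values are missing and the last of them fills the remaining gap. If `v` is the next
value, `p, v - 1` are the innermost entries of the block containing `v - 1` and `z, w` those of the
other block, then `g = v - 2 - p`, `d = v - 1 - w`, and `v + e` is the largest value allowed next to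
`w`, that is `e = κ + 1 + 2 * w - z - v`. The value `⊤` stands for the absence of a constraint. -/
noncomputable def completions (κ : ℕ) : ℕ → ℕ∞ → ℕ∞ → ℕ∞ → ℕ
  | 0, _, _, _ => 1
  | n + 1, g, e, d =>
    (if e = 0 then 0 else completions κ n 0 (e - 1) (d + 1)) + completions κ n d (g + κ) 1

section Completions

variable (κ n : ℕ) (g e d : ℕ∞)

theorem completions_succ :
    completions κ (n + 1) g e d =
      (if e = 0 then 0 else completions κ n 0 (e - 1) (d + 1)) + completions κ n d (g + κ) 1 :=
  rfl

theorem completions_succ_zero :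
    completions κ (n + 1) g 0 d = completions κ n d (g + κ) 1 := by
  rw [completions_succ, if_pos rfl, zero_add]

theorem completions_succ_add_one :
    completions κ (n + 1) g (e + 1) d =
      completions κ n 0 e (d + 1) + completions κ n d (g + κ) 1 := by
  rw [completions_succ, if_neg (by simp),
    (ENat.addLECancellable_of_ne_top ENat.one_ne_top).add_tsub_cancel_right]

theorem completions_succ_top :
    completions κ (n + 1) g ⊤ d =
      completions κ n 0 ⊤ (d + 1) + completions κ n d (g + κ) 1 := by
  simpa using completions_succ_add_one κ n g ⊤ d

theorem completions_switch_le :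
    completions κ n d (g + κ) 1 ≤ completions κ (n + 1) g e d := by
  rw [completions_succ]
  exact Nat.le_add_left _ _

theorem completions_le_succ : completions κ n g e d ≤ completions κ (n + 1) g e d := by
  induction n generalizing g e d with
  | zero => simp only [completions]; split_ifs <;> omega
  | succ n ih =>
    rw [completions_succ κ n g e d, completions_succ κ (n + 1)]
    refine add_le_add ?_ (ih ..)
    split_ifs
    exacts [le_rfl, ih ..]

theorem completions_succ_le_two_mul :
    completions κ (n + 1) g e d ≤ 2 * completions κ n g e d := by
  induction n generalizing g e d with
  | zero => simp only [completions]; split_ifs <;> omega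
  | succ n ih =>
    rw [completions_succ κ (n + 1), completions_succ κ n g e d, mul_add]
    refine add_le_add ?_ (ih ..)
    split_ifs
    exacts [Nat.zero_le _, ih ..]

theorem completions_pos : 0 < completions κ n g e d := by
  induction n with
  | zero => exact one_pos
  | succ n ih => exact ih.trans_le (completions_le_succ κ n g e d)

theorem completions_add_le_two_pow_mul (j : ℕ) :
    completions κ (n + j) g e d ≤ 2 ^ j * completions κ n g e d := by
  induction j with
  | zero => simp
  | succ j ih =>
    rw [pow_succ', mul_assoc]
    exact (completions_succ_le_two_mul κ (n + j) g e d).trans (Nat.mul_le_mul_left 2 ih)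

theorem completions_le_two_pow : completions κ n g e d ≤ 2 ^ n := by
  simpa [completions] using completions_add_le_two_pow_mul κ 0 g e d n

variable {g e d} in
theorem completions_mono {g' e' d' : ℕ∞} (hg : g ≤ g') (he : e ≤ e') (hd : d ≤ d') :
    completions κ n g e d ≤ completions κ n g' e' d' := by
  induction n generalizing g e d g' e' d' with
  | zero => exact le_rfl
  | succ n ih =>
    rw [completions_succ, completions_succ]
    refine add_le_add ?_ (ih hd (by gcongr) le_rfl)
    split_ifs with h h'
    · exact le_rfl
    · exact Nat.zero_le _
    · exact absurd (nonpos_iff_eq_zero.1 (by simp_all)) h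
    · exact ih le_rfl (tsub_le_tsub_right he 1) (by gcongr)

/-- The completions of a state without any constraint, the maximum over all states. -/
noncomputable def freeCompletions : ℕ := completions κ n ⊤ ⊤ ⊤

/-- The completions of a state constrained only by its last two values `v - 2, v - 1`, which lie
next to each other. -/
noncomputable def oneSidedCompletions : ℕ := completions κ n 0 ⊤ ⊤

/-- The completions of the state that is reached from every state by placing the next three values
each on the side opposite to the previous one. -/
noncomputable def tightCompletions : ℕ := completions κ n 1 (1 + κ) 1

theorem completions_le_freeCompletions : completions κ n g e d ≤ freeCompletions κ n :=
  completions_mono κ n le_top le_top le_top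

theorem tightCompletions_le : tightCompletions κ n ≤ completions κ (n + 3) g e d :=
  calc
    tightCompletions κ n ≤ completions κ (n + 1) 1 (d + κ) 1 := completions_switch_le ..
    _ ≤ completions κ (n + 2) d (g + κ) 1 := completions_switch_le ..
    _ ≤ completions κ (n + 3) g e d := completions_switch_le ..

theorem tightCompletions_le_eight_mul : tightCompletions κ n ≤ 8 * completions κ n g e d :=
  (tightCompletions_le κ n g e d).trans (completions_add_le_two_pow_mul κ n g e d 3)

theorem tightCompletions_succ :
    tightCompletions κ (n + 1) = completions κ n 0 κ 2 + tightCompletions κ n := by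
  rw [tightCompletions, add_comm (1 : ℕ∞) (κ : ℕ∞), completions_succ_add_one, tightCompletions,
    one_add_one_eq_two]

theorem tightCompletions_le_succ : tightCompletions κ n ≤ tightCompletions κ (n + 1) :=
  completions_le_succ ..

theorem tightCompletions_zero_growth :
    tightCompletions 0 (n + 6) + tightCompletions 0 (n + 4) + tightCompletions 0 n ≤
      tightCompletions 0 (n + 7) := by
  have switch (m : ℕ) (g d : ℕ∞) : completions 0 (m + 1) g 0 d = completions 0 m d g 1 := by
    simpa using completions_succ_zero 0 m g d
  have stay (m : ℕ) (g e d : ℕ∞) :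
      completions 0 (m + 1) g (e + 1) d = completions 0 m 0 e (d + 1) + completions 0 m d g 1 := by
    simpa using completions_succ_add_one 0 m g e d
  have tight_succ (m : ℕ) :
      tightCompletions 0 (m + 1) = completions 0 m 0 0 2 + tightCompletions 0 m := by
    simpa using tightCompletions_succ 0 m
  calc
    _ ≤ completions 0 (n + 4) 1 2 1 + tightCompletions 0 (n + 6) := ?_
    _ = completions 0 (n + 6) 0 0 2 + tightCompletions 0 (n + 6) := by rw [switch, switch]
    _ = tightCompletions 0 (n + 7) := (tight_succ (n + 6)).symm
  have h₁ : completions 0 (n + 4) 1 2 1 =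
      completions 0 (n + 3) 0 1 2 + tightCompletions 0 (n + 3) := by
    simpa [one_add_one_eq_two, tightCompletions] using stay (n + 3) 1 1 1
  have h₂ : completions 0 (n + 3) 0 1 2 =
      completions 0 (n + 2) 0 0 3 + completions 0 (n + 3) 0 0 2 := by
    rw [switch (n + 2)]
    simpa [two_add_one_eq_three] using stay (n + 2) 0 0 2
  have h₃ : tightCompletions 0 n ≤ completions 0 (n + 2) 0 0 3 := by
    rw [switch, switch]
    exact completions_mono 0 n le_rfl (by norm_num) le_rfl
  have h₄ : tightCompletions 0 (n + 4) =
      completions 0 (n + 3) 0 0 2 + tightCompletions 0 (n + 3) :=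
    tight_succ (n + 3)
  omega

theorem tightCompletions_one_growth :
    tightCompletions 1 (n + 6) + tightCompletions 1 (n + 4) + tightCompletions 1 n ≤
      tightCompletions 1 (n + 7) := by
  have h₁ : tightCompletions 1 n ≤ completions 1 (n + 5) 0 0 3 :=
    calc
      _ ≤ tightCompletions 1 (n + 1) := tightCompletions_le_succ 1 n
      _ ≤ tightCompletions 1 (n + 2) := tightCompletions_le_succ 1 (n + 1)
      _ ≤ completions 1 (n + 5) 0 0 3 := tightCompletions_le 1 (n + 2) 0 0 3
  have h₂ : tightCompletions 1 (n + 4) ≤ completions 1 (n + 5) 2 1 1 :=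
    (completions_mono 1 (n + 4) le_rfl (by norm_num) le_rfl).trans
      (completions_switch_le 1 (n + 4) 2 1 1)
  have h₃ : completions 1 (n + 6) 0 1 2 =
      completions 1 (n + 5) 0 0 3 + completions 1 (n + 5) 2 1 1 := by
    simpa [two_add_one_eq_three] using completions_succ_add_one 1 (n + 5) 0 0 2
  have h₄ : tightCompletions 1 (n + 7) =
      completions 1 (n + 6) 0 1 2 + tightCompletions 1 (n + 6) := by
    simpa using tightCompletions_succ 1 (n + 6)
  omega

theorem completions_one_top_one_succ_le :
    completions κ (n + 1) 1 ⊤ 1 ≤ oneSidedCompletions κ n + tightCompletions κ n := by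
  rw [completions_succ_top]
  gcongr
  · exact completions_mono κ n le_rfl le_rfl le_top
  · exact le_rfl

variable {κ} in
theorem completions_top_self_one_succ_le (hκ : κ ≤ 1) :
    completions κ (n + 1) ⊤ κ 1 ≤ tightCompletions κ (n + 1) + completions κ n 1 ⊤ 1 := by
  rcases Nat.le_one_iff_eq_zero_or_eq_one.1 hκ with rfl | rfl
  · simpa using (completions_succ_zero 0 n ⊤ 1).le.trans (Nat.le_add_left _ _)
  · calc
      completions 1 (n + 1) ⊤ (1 : ℕ) 1
        = completions 1 n 0 0 2 + completions 1 n 1 ⊤ 1 := by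
          simpa [one_add_one_eq_two] using completions_succ_add_one 1 n ⊤ 0 1
      _ ≤ tightCompletions 1 (n + 1) + completions 1 n 1 ⊤ 1 := by
          rw [tightCompletions_succ]
          gcongr
          exact (completions_mono 1 n le_rfl zero_le le_rfl).trans (Nat.le_add_right _ _)

theorem oneSidedCompletions_succ :
    oneSidedCompletions κ (n + 1) = oneSidedCompletions κ n + completions κ n ⊤ κ 1 := by
  simpa [oneSidedCompletions] using completions_succ_top κ n 0 ⊤

variable {κ} in
theorem oneSidedCompletions_add_three_le (hκ : κ ≤ 1) :
    oneSidedCompletions κ (n + 3) ≤ oneSidedCompletions κ (n + 2) + tightCompletions κ (n + 2) +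
      (oneSidedCompletions κ n + tightCompletions κ n) := by
  rw [oneSidedCompletions_succ, add_assoc]
  grw [completions_top_self_one_succ_le (n + 1) hκ, completions_one_top_one_succ_le]

variable {κ} in
/-- Both counts satisfy the recursion `x (m + 7) ∼ x (m + 6) + x (m + 4)` up to lower order terms,
and the surplus `tightCompletions κ m` absorbs the error terms of `oneSidedCompletions`. -/
theorem oneSidedCompletions_le (hκ : κ ≤ 1) :
    oneSidedCompletions κ n ≤ 128 * tightCompletions κ n := by
  induction n using Nat.strong_induction_on with
  | _ n ih =>
    rcases lt_or_ge n 7 with hn | hn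
    · calc
        oneSidedCompletions κ n ≤ 2 ^ n := completions_le_two_pow ..
        _ ≤ 2 ^ 7 := Nat.pow_le_pow_right two_pos hn.le
        _ ≤ 128 * tightCompletions κ n := Nat.le_mul_of_pos_right _ (completions_pos ..)
    obtain ⟨m, rfl⟩ := Nat.exists_eq_add_of_le' hn
    have hrec : oneSidedCompletions κ (m + 7) ≤ oneSidedCompletions κ (m + 6) +
        tightCompletions κ (m + 6) + (oneSidedCompletions κ (m + 4) + tightCompletions κ (m + 4)) :=
      oneSidedCompletions_add_three_le (m + 4) hκ
    have hgrowth : tightCompletions κ (m + 6) + tightCompletions κ (m + 4) +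
        tightCompletions κ m ≤ tightCompletions κ (m + 7) := by
      rcases Nat.le_one_iff_eq_zero_or_eq_one.1 hκ with rfl | rfl
      exacts [tightCompletions_zero_growth m, tightCompletions_one_growth m]
    have h₄ : tightCompletions κ (m + 4) ≤ 2 ^ 4 * tightCompletions κ m :=
      completions_add_le_two_pow_mul ..
    have h₆ : tightCompletions κ (m + 6) ≤ 2 ^ 6 * tightCompletions κ m :=
      completions_add_le_two_pow_mul ..
    have ih₄ := ih (m + 4) (by omega)
    have ih₆ := ih (m + 6) (by omega)
    omega

variable {κ} in
theorem freeCompletions_le_mul_tightCompletions (hκ : κ ≤ 1) :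
    freeCompletions κ n ≤ 385 * tightCompletions κ n := by
  have hone_sided (d : ℕ∞) : completions κ n 0 ⊤ d ≤ oneSidedCompletions κ n :=
    completions_mono κ n le_rfl le_rfl le_top
  have hfree : freeCompletions κ n ≤ oneSidedCompletions κ n + completions κ n ⊤ ⊤ 1 :=
    calc
      freeCompletions κ n ≤ freeCompletions κ (n + 1) := completions_le_succ ..
      _ = oneSidedCompletions κ n + completions κ n ⊤ ⊤ 1 := by
        simpa [freeCompletions, oneSidedCompletions] using completions_succ_top κ n ⊤ ⊤
  have hnear : completions κ n ⊤ ⊤ 1 ≤ oneSidedCompletions κ n + completions κ n 1 ⊤ 1 :=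
    calc
      completions κ n ⊤ ⊤ 1 ≤ completions κ (n + 1) ⊤ ⊤ 1 := completions_le_succ ..
      _ = completions κ n 0 ⊤ (1 + 1) + completions κ n 1 ⊤ 1 := by
        simpa using completions_succ_top κ n ⊤ 1
      _ ≤ oneSidedCompletions κ n + completions κ n 1 ⊤ 1 := by grw [hone_sided]
  have hnearer : completions κ n 1 ⊤ 1 ≤ oneSidedCompletions κ n + tightCompletions κ n :=
    (completions_le_succ ..).trans (completions_one_top_one_succ_le κ n)
  have := oneSidedCompletions_le n hκ
  omega

variable {κ} in
theorem freeCompletions_le_mul_completions (hκ : κ ≤ 1) :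
    freeCompletions κ n ≤ 3080 * completions κ n g e d := by
  have h₁ := freeCompletions_le_mul_tightCompletions n hκ
  have h₂ := tightCompletions_le_eight_mul κ n g e d
  omega

theorem completions_add_le (m : ℕ) :
    completions κ (m + n) g e d ≤ completions κ m g e d * freeCompletions κ n := by
  induction m generalizing g e d with
  | zero => simpa [completions] using completions_le_freeCompletions κ n g e d
  | succ m ih =>
    rw [Nat.add_right_comm, completions_succ, completions_succ, add_mul]
    refine add_le_add ?_ (ih ..)
    split_ifs
    exacts [Nat.zero_le _, ih ..]

variable {κ} in
theorem completions_mul_freeCompletions_le (hκ : κ ≤ 1) (m : ℕ) :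
    completions κ m g e d * freeCompletions κ n ≤ 3080 * completions κ (m + n) g e d := by
  induction m generalizing g e d with
  | zero => simpa [completions] using freeCompletions_le_mul_completions n g e d hκ
  | succ m ih =>
    rw [Nat.add_right_comm, completions_succ, completions_succ, add_mul, mul_add]
    refine add_le_add ?_ (ih ..)
    split_ifs
    exacts [(zero_mul _).trans_le (Nat.zero_le _), ih ..]

end Completions

theorem exists_pow_bounds_freeCompletions {κ : ℕ} (hκ : κ ≤ 1) :
    ∃ C : ℝ, 0 < C ∧
      ∀ n, C ^ n ≤ freeCompletions κ n ∧ (freeCompletions κ n : ℝ) ≤ 3080 * C ^ n := by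
  refine exists_pow_bounds_of_quasi_multiplicative (fun n ↦ ?_) (by norm_num) (fun m n ↦ ?_)
    fun m n ↦ ?_
  · exact_mod_cast completions_pos κ n ⊤ ⊤ ⊤
  · exact_mod_cast completions_add_le κ n ⊤ ⊤ ⊤ m
  · exact_mod_cast completions_mul_freeCompletions_le n ⊤ ⊤ ⊤ hκ m

/-! ### Convex lists -/

/-- The analogue of `IsKConvex` for a list of integers, read from left to right. -/
def KConvexList (k : ℤ) (l : List ℤ) : Prop :=
  ∀ ⦃u v w : ℤ⦄, [u, v, w] <:+: l → u + w - 2 * v ≤ k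

section KConvexList

variable {k : ℤ} {l l' : List ℤ}

theorem KConvexList.of_infix (hl : KConvexList k l) (h : l' <:+: l) : KConvexList k l' :=
  fun _ _ _ huvw ↦ hl (huvw.trans h)

theorem KConvexList.of_length_lt_three (hl : l.length < 3) : KConvexList k l :=
  fun _ _ _ h ↦ absurd h.length_le (by simpa using hl)

theorem kConvexList_iff_getElem :
    KConvexList k l ↔ ∀ i (h : i + 2 < l.length), l[i] + l[i + 2] - 2 * l[i + 1] ≤ k := by
  constructor
  · intro hl i hi
    refine hl (List.infix_iff_getElem?.2 ⟨i, (add_comm 3 i).trans_le hi, fun m hm ↦ ?_⟩)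
    have hm3 : m < 3 := hm
    interval_cases m <;> simp [add_comm _ i]
  · intro hl u v w huvw
    obtain ⟨i, hi, hget⟩ := List.infix_iff_getElem?.1 huvw
    have hentry (m : ℕ) (hm : m < 3) : ∃ h : i + m < l.length, l[i + m] = [u, v, w][m] := by
      simpa [add_comm, List.getElem?_eq_some_iff] using hget m hm
    obtain ⟨_, rfl : _ = u⟩ := hentry 0 (by norm_num)
    obtain ⟨_, rfl : _ = v⟩ := hentry 1 (by norm_num)
    obtain ⟨hlen, rfl : _ = w⟩ := hentry 2 (by norm_num)
    exact hl i hlen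

theorem kConvexList_cons_cons_cons {a b c : ℤ} :
    KConvexList k (a :: b :: c :: l) ↔ a + c - 2 * b ≤ k ∧ KConvexList k (b :: c :: l) := by
  refine ⟨fun h ↦ ⟨h (List.prefix_append [a, b, c] l).isInfix,
    h.of_infix (List.suffix_cons a _).isInfix⟩, ?_⟩
  rintro ⟨habc, h⟩ u v w huvw
  rcases List.infix_cons_iff.1 huvw with hprefix | hinfix
  · simp only [List.cons_prefix_cons, List.nil_prefix, and_true] at hprefix
    obtain ⟨rfl, rfl, rfl⟩ := hprefix
    exact habc
  · exact h hinfix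

theorem KConvexList.reverse (hl : KConvexList k l) : KConvexList k l.reverse := by
  intro u v w huvw
  have := @hl w v u (by simpa using List.reverse_infix.2 huvw)
  linarith

theorem kConvexList_reverse : KConvexList k l.reverse ↔ KConvexList k l :=
  ⟨fun h ↦ by simpa using h.reverse, KConvexList.reverse⟩

/-- This is where `k ≤ 2` enters: the two neighbours of an interior minimum `v` are distinct, so
they contribute at least `1 + 2`. -/
theorem KConvexList.min_eq_head_or_last (hl : KConvexList k l) (hk : k ≤ 2) (hnodup : l.Nodup)
    {v : ℤ} (hv : v ∈ l) (hmin : ∀ u ∈ l, v ≤ u) :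
    (∃ t, l = v :: t) ∨ ∃ t, l = t ++ [v] := by
  obtain ⟨s, t, rfl⟩ := List.append_of_mem hv
  rcases List.eq_nil_or_concat s with rfl | ⟨s, u, rfl⟩
  · exact .inl ⟨t, rfl⟩
  rcases t with _ | ⟨w, t⟩
  · exact .inr ⟨_, rfl⟩
  exfalso
  have hconvex : u + w - 2 * v ≤ k := hl ⟨s, t, by simp⟩
  have hdistinct : u ≠ v ∧ u ≠ w ∧ v ≠ w := by
    have : [u, v, w].Nodup := hnodup.sublist (List.IsInfix.sublist ⟨s, t, by simp⟩)
    simp_all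
  have hu := hmin u (by simp)
  have hw := hmin w (by simp)
  omega

theorem KConvexList.cons_cons_of_le {N b : ℤ} (hl : KConvexList k (b :: l)) (hk : 0 ≤ k)
    (hb : 0 ≤ b) (hN : ∀ x ∈ b :: l, x ≤ N) : KConvexList k (-3 * N :: -N :: b :: l) := by
  have hbN := hN b (by simp)
  refine kConvexList_cons_cons_cons.2 ⟨by linarith, ?_⟩
  rcases l with _ | ⟨c, l⟩
  · exact .of_length_lt_three (by simp)
  · have hcN := hN c (by simp)
    exact kConvexList_cons_cons_cons.2 ⟨by linarith, hl⟩

theorem KConvexList.extend_both_sides {N : ℤ} (hl : KConvexList k l) (hk : 0 ≤ k) (hne : l ≠ [])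
    (hN : ∀ x ∈ l, 0 ≤ x ∧ x ≤ N) : KConvexList k ([-3 * N, -N] ++ l ++ [-N, -3 * N]) := by
  obtain ⟨a, s, ha⟩ := List.exists_cons_of_ne_nil (List.reverse_ne_nil_iff.2 hne)
  have hN_rev : ∀ x ∈ a :: s, 0 ≤ x ∧ x ≤ N := fun x hx ↦ hN x (by simpa [← ha] using hx)
  have hright : KConvexList k (l ++ [-N, -3 * N]) := by
    have := (KConvexList.cons_cons_of_le (ha ▸ hl.reverse) hk (hN_rev a (by simp)).1
      fun x hx ↦ (hN_rev x hx).2).reverse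
    simpa [← ha] using this
  obtain ⟨b, t, rfl⟩ := List.exists_cons_of_ne_nil hne
  have hb := hN b (by simp)
  refine hright.cons_cons_of_le hk hb.1 fun x hx ↦ ?_
  rcases List.mem_append.1 (show x ∈ b :: t ++ [-N, -3 * N] from hx) with hx | hx
  · exact (hN x hx).2
  · simp only [List.mem_cons, List.not_mem_nil, or_false] at hx
    rcases hx with rfl | rfl <;> linarith

end KConvexList

/-! ### Arrangements in a fixed context -/

/-- The orderings of `S` that are `k`-convex once they are surrounded by `x₁, x₂` on the left and
`y₂, y₁` on the right. -/
def arrangements (k : ℤ) (S : Finset ℤ) (x₁ x₂ y₁ y₂ : ℤ) : Set (List ℤ) :=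
  {l | l.Perm S.toList ∧ KConvexList k ([x₁, x₂] ++ l ++ [y₂, y₁])}

section Arrangements

variable {k : ℤ} {S : Finset ℤ} {v x₁ x₂ y₁ y₂ : ℤ} {l : List ℤ}

theorem reverse_mem_arrangements :
    l.reverse ∈ arrangements k S x₁ x₂ y₁ y₂ ↔ l ∈ arrangements k S y₁ y₂ x₁ x₂ := by
  refine and_congr (List.reverse_perm' ..) ?_
  rw [← kConvexList_reverse]
  simp

theorem encard_arrangements_swap :
    (arrangements k S x₁ x₂ y₁ y₂).encard = (arrangements k S y₁ y₂ x₁ x₂).encard := by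
  rw [← Set.encard_preimage_of_bijective List.reverse_involutive.bijective]
  congr 1
  ext l
  exact reverse_mem_arrangements

theorem arrangements_eq_empty (hS : S.Nonempty) (hx : ∀ a ∈ S, k < x₁ + a - 2 * x₂) :
    arrangements k S x₁ x₂ y₁ y₂ = ∅ := by
  refine Set.eq_empty_of_forall_notMem fun l ⟨hperm, hconvex⟩ ↦ ?_
  rcases l with _ | ⟨a, l⟩
  · exact hS.ne_empty (by simpa using hperm)
  · have haS : a ∈ S := by simpa using hperm.subset (List.mem_cons_self ..)
    exact (hx a haS).not_ge (hconvex ⟨[], l ++ [y₂, y₁], by simp⟩)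

theorem cons_mem_arrangements_insert (hv : v ∉ S) (hx : x₁ + v - 2 * x₂ ≤ k) :
    v :: l ∈ arrangements k (insert v S) x₁ x₂ y₁ y₂ ↔ l ∈ arrangements k S x₂ v y₁ y₂ := by
  refine and_congr ?_ ?_
  · rw [(Finset.toList_insert hv).congr_right, List.perm_cons]
  · simp only [List.cons_append, List.nil_append, kConvexList_cons_cons_cons, hx, true_and]

theorem append_singleton_mem_arrangements_insert (hv : v ∉ S) (hy : y₁ + v - 2 * y₂ ≤ k) :
    l ++ [v] ∈ arrangements k (insert v S) x₁ x₂ y₁ y₂ ↔ l ∈ arrangements k S x₁ x₂ y₂ v := by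
  rw [← reverse_mem_arrangements, List.reverse_append, List.reverse_singleton,
    List.singleton_append, cons_mem_arrangements_insert hv hy, reverse_mem_arrangements]

theorem arrangements_insert_min (hk : k ≤ 2) (hv : ∀ u ∈ S, v < u) (hx : x₁ + v - 2 * x₂ ≤ k)
    (hy : y₁ + v - 2 * y₂ ≤ k) :
    arrangements k (insert v S) x₁ x₂ y₁ y₂ =
      (v :: ·) '' arrangements k S x₂ v y₁ y₂ ∪ (· ++ [v]) '' arrangements k S x₁ x₂ y₂ v := by
  have hvS : v ∉ S := fun h ↦ lt_irrefl v (hv v h)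
  ext l
  constructor
  · rintro ⟨hperm, hconvex⟩
    have hmem {u : ℤ} : u ∈ l ↔ u = v ∨ u ∈ S := by simp [hperm.mem_iff]
    rcases (hconvex.of_infix ⟨_, _, rfl⟩).min_eq_head_or_last hk
      (hperm.nodup_iff.2 (Finset.nodup_toList _)) (hmem.2 (.inl rfl))
      (fun u hu ↦ (hmem.1 hu).elim ge_of_eq fun h ↦ (hv u h).le) with ⟨t, rfl⟩ | ⟨t, rfl⟩
    · exact .inl ⟨t, (cons_mem_arrangements_insert hvS hx).1 ⟨hperm, hconvex⟩, rfl⟩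
    · exact .inr ⟨t, (append_singleton_mem_arrangements_insert hvS hy).1 ⟨hperm, hconvex⟩, rfl⟩
  · rintro (⟨t, ht, rfl⟩ | ⟨t, ht, rfl⟩)
    · exact (cons_mem_arrangements_insert hvS hx).2 ht
    · exact (append_singleton_mem_arrangements_insert hvS hy).2 ht

theorem encard_arrangements_insert_min (hk : k ≤ 2) (hS : S.Nonempty) (hv : ∀ u ∈ S, v < u)
    (hx : x₁ + v - 2 * x₂ ≤ k) (hy : y₁ + v - 2 * y₂ ≤ k) :
    (arrangements k (insert v S) x₁ x₂ y₁ y₂).encard =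
      (arrangements k S x₂ v y₁ y₂).encard + (arrangements k S x₁ x₂ y₂ v).encard := by
  rw [arrangements_insert_min hk hv hx hy, Set.encard_union_eq,
    List.cons_injective.encard_image, (List.append_left_injective [v]).encard_image]
  rw [Set.disjoint_left]
  rintro _ ⟨t, -, rfl⟩ ⟨s, ⟨hperm, -⟩, hst⟩
  rcases s with _ | ⟨a, s⟩
  · exact hS.ne_empty (by simpa using hperm)
  · have ha : a ∈ S := by simpa using hperm.subset (List.mem_cons_self ..)
    have hav : a = v := (List.cons.inj hst).1
    exact (hv a ha).ne' hav

theorem encard_arrangements_singleton (hx : x₁ + v - 2 * x₂ ≤ k) (hy : y₁ + v - 2 * y₂ ≤ k)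
    (hxy : x₂ + y₂ - 2 * v ≤ k) : (arrangements k {v} x₁ x₂ y₁ y₂).encard = 1 := by
  rw [Set.encard_eq_one]
  refine ⟨[v], Set.eq_singleton_iff_unique_mem.2 ⟨⟨by simp, ?_⟩, fun l hl ↦ by simpa using hl.1⟩⟩
  simp only [List.cons_append, List.nil_append, kConvexList_cons_cons_cons]
  exact ⟨hx, hxy, by linarith, .of_length_lt_three (by simp)⟩

end Arrangements

theorem encard_arrangements_Ico {κ : ℕ} (hκ : κ ≤ 1) {N : ℤ} (m : ℕ) {v x₁ y₁ y₂ : ℤ} {g e d : ℕ}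
    (hN : N = v + m + 1) (hg : g = v - 2 - x₁) (he : e = κ + 1 + 2 * y₂ - y₁ - v)
    (hd : d = v - 1 - y₂) :
    (arrangements (κ + 1) (Finset.Ico v N) x₁ (v - 1) y₁ y₂).encard = completions κ m g e d := by
  induction m generalizing v x₁ y₁ y₂ g e d with
  | zero =>
    have hsingleton : Finset.Ico v N = {v} := by
      ext u
      simp only [Finset.mem_Ico, Finset.mem_singleton]
      omega
    rw [hsingleton, encard_arrangements_singleton] <;> first | rfl | omega
  | succ m ih =>
    have hlt {u : ℤ} (hu : u ∈ Finset.Ico (v + 1) N) : v < u := (Finset.mem_Ico.1 hu).1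
    have hnonempty : (Finset.Ico (v + 1) N).Nonempty := Finset.nonempty_Ico.2 (by omega)
    have hswitch : (arrangements (κ + 1) (Finset.Ico (v + 1) N) x₁ (v - 1) y₂ v).encard =
        completions κ m d (g + κ) 1 := by
      rw [encard_arrangements_swap]
      simpa using @ih (v + 1) y₂ x₁ (v - 1) d (g + κ) 1 (by omega) (by omega) (by omega) (by omega)
    rw [← Finset.insert_Ico_add_one_left_eq_Ico (by omega), encard_arrangements_insert_min
      (by omega) hnonempty (fun _ ↦ hlt) (by omega) (by omega), hswitch]
    rcases e with _ | e
    · have hempty : arrangements (κ + 1) (Finset.Ico (v + 1) N) (v - 1) v y₁ y₂ = ∅ := by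
        rw [← Set.encard_eq_zero, encard_arrangements_swap, Set.encard_eq_zero]
        exact arrangements_eq_empty hnonempty fun a ha ↦ by have := hlt ha; omega
      rw [hempty, Set.encard_empty, zero_add, Nat.cast_zero, completions_succ_zero]
    · have hstay : (arrangements (κ + 1) (Finset.Ico (v + 1) N) (v - 1) v y₁ y₂).encard =
          completions κ m 0 e (d + 1) := by
        simpa using
          @ih (v + 1) (v - 1) y₁ y₂ 0 e (d + 1) (by omega) (by omega) (by omega) (by omega)
      rw [hstay, Nat.cast_succ, completions_succ_add_one, Nat.cast_add]

/-! ### One-line notation -/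

section OneLine

variable {n p : ℕ}

/-- The one-line notation of a permutation, with values in `{0, …, n - 1}`. -/
def oneLine (π : Equiv.Perm (Fin n)) : List ℤ :=
  List.ofFn fun i ↦ ((π i : ℕ) : ℤ)

theorem perm_ofFn_iff {α : Type*} {f : Fin n → α} (hf : Function.Injective f) {l : List α} :
    l.Perm (List.ofFn f) ↔ ∃ σ : Equiv.Perm (Fin n), List.ofFn (f ∘ σ) = l := by
  constructor
  · intro h
    obtain ⟨g, rfl⟩ : ∃ g : Fin n → α, List.ofFn g = l := by
      obtain rfl : l.length = n := by simpa using h.length_eq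
      exact ⟨l.get, List.ofFn_get l⟩
    have hg : Function.Injective g :=
      List.nodup_ofFn.1 (h.nodup_iff.2 (List.nodup_ofFn.2 hf))
    have hrange (i : Fin n) : ∃ j, f j = g i := by
      simpa [List.mem_ofFn'] using h.subset ((List.mem_ofFn' g _).2 ⟨i, rfl⟩)
    choose σ hσ using hrange
    have hσ_inj : Function.Injective σ := fun i j hij ↦ hg (by rw [← hσ, ← hσ, hij])
    exact ⟨.ofBijective σ (Finite.injective_iff_bijective.1 hσ_inj), congrArg _ (funext hσ)⟩
  · rintro ⟨σ, rfl⟩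
    exact σ.ofFn_comp_perm f

theorem toList_Ico_perm_ofFn :
    (Finset.Ico 0 (n : ℤ)).toList.Perm (List.ofFn fun i : Fin n ↦ ((i : ℕ) : ℤ)) := by
  refine (List.perm_ext_iff_of_nodup (Finset.nodup_toList _) (List.nodup_ofFn.2 ?_)).2 fun a ↦ ?_
  · exact Nat.cast_injective.comp Fin.val_injective
  · rw [Finset.mem_toList, Finset.mem_Ico, List.mem_ofFn']
    constructor
    · exact fun ⟨h₀, hn⟩ ↦ ⟨⟨a.toNat, (Int.toNat_lt h₀).2 hn⟩, Int.toNat_of_nonneg h₀⟩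
    · rintro ⟨i, rfl⟩
      exact ⟨Int.natCast_nonneg i, Int.ofNat_lt.2 i.isLt⟩

theorem range_oneLine :
    Set.range (oneLine (n := n)) = {l | l.Perm (Finset.Ico 0 (n : ℤ)).toList} := by
  ext l
  exact ((toList_Ico_perm_ofFn.congr_right l).trans
    (perm_ofFn_iff (Nat.cast_injective.comp Fin.val_injective))).symm

theorem oneLine_injective : Function.Injective (oneLine (n := n)) := fun _ _ h ↦
  Equiv.ext fun i ↦ Fin.ext (Nat.cast_injective (congrFun (List.ofFn_injective h) i))

theorem kConvexList_ofFn {k : ℕ} {f : Fin n → Fin p} :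
    KConvexList k (List.ofFn fun i ↦ ((f i : ℕ) : ℤ)) ↔ IsKConvex k f := by
  simp only [kConvexList_iff_getElem, List.length_ofFn, List.getElem_ofFn]
  constructor
  · rintro h ⟨i, _⟩ ⟨j, _⟩ ⟨l, hl⟩ hij hjl
    obtain rfl : i + 1 = j := hij
    obtain rfl : i + 1 + 1 = l := hjl
    exact h i hl
  · exact fun h i hi ↦ h ⟨i, by omega⟩ ⟨i + 1, by omega⟩ ⟨i + 2, hi⟩ rfl rfl

theorem cast_fk (k n : ℕ) :
    (fk k n : ℕ∞) = {l | l.Perm (Finset.Ico 0 (n : ℤ)).toList ∧ KConvexList k l}.encard := by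
  have himage : {l | l.Perm (Finset.Ico 0 (n : ℤ)).toList ∧ KConvexList k l} =
      oneLine '' {π : Equiv.Perm (Fin n) | IsKConvex k π} := by
    simp only [← kConvexList_ofFn]
    rw [Set.ofPred_and, ← range_oneLine, Set.inter_comm]
    exact Set.image_preimage_eq_inter_range.symm
  rw [himage, oneLine_injective.encard_image, ← Set.Finite.cast_ncard_eq (Set.toFinite _)]
  rfl

end OneLine

/-! ### Bounds on the number of convex permutations -/

section FkBounds

variable {κ : ℕ}

theorem freeCompletions_le_mul_fk_succ (hκ : κ ≤ 1) (m : ℕ) :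
    freeCompletions κ m ≤ 3080 * fk (κ + 1) (m + 1) := by
  have hcount : (arrangements (κ + 1) (Finset.Ico 0 (m + 1)) (-2) (-1) (-2) (-1)).encard =
      completions κ m 0 (κ + 1) 0 := by
    simpa using @encard_arrangements_Ico κ hκ (m + 1) m 0 (-2) (-2) (-1) 0 (κ + 1) 0
      (by omega) (by omega) (by omega) (by omega)
  have hle : completions κ m 0 (κ + 1) 0 ≤ fk (κ + 1) (m + 1) := by
    rw [← Nat.cast_le (α := ℕ∞), ← hcount, cast_fk]
    refine Set.encard_le_encard fun l ⟨hperm, hconvex⟩ ↦ ⟨by simpa using hperm, ?_⟩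
    exact_mod_cast hconvex.of_infix ⟨_, _, rfl⟩
  grw [freeCompletions_le_mul_completions m 0 (κ + 1) 0 hκ, hle]

theorem freeCompletions_le_mul_fk (hκ : κ ≤ 1) {n : ℕ} (hn : 1 ≤ n) :
    freeCompletions κ n ≤ 6160 * fk (κ + 1) n := by
  obtain ⟨m, rfl⟩ := Nat.exists_eq_add_of_le' hn
  have hstep : freeCompletions κ (m + 1) ≤ 2 * freeCompletions κ m :=
    completions_succ_le_two_mul ..
  have := freeCompletions_le_mul_fk_succ hκ m
  omega

theorem fk_add_two_le (hκ : κ ≤ 1) (m : ℕ) :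
    fk (κ + 1) (m + 2) ≤ 2 * freeCompletions κ m := by
  set N : ℤ := m + 1 with hN
  have hbranch : (arrangements (κ + 1) (Finset.Ico 1 (N + 1)) (-N) 0 (-3 * N) (-N)).encard =
      completions κ m m (κ + m + 1) (m + 1) := by
    simpa using @encard_arrangements_Ico κ hκ (N + 1) m 1 (-N) (-3 * N) (-N) m (κ + m + 1) (m + 1)
      (by omega) (by omega) (by push_cast; omega) (by omega)
  have hcount : (arrangements (κ + 1) (Finset.Ico 0 (N + 1)) (-3 * N) (-N) (-3 * N) (-N)).encard =
      2 * (completions κ m m (κ + m + 1) (m + 1) : ℕ) := by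
    have hlt (u : ℤ) (hu : u ∈ Finset.Ico 1 (N + 1)) : 0 < u := (Finset.mem_Ico.1 hu).1
    rw [← Finset.insert_Ico_add_one_left_eq_Ico (by omega), zero_add,
      encard_arrangements_insert_min (by omega) (Finset.nonempty_Ico.2 (by omega)) hlt (by omega)
        (by omega),
      encard_arrangements_swap (x₁ := -3 * N), hbranch, two_mul]
  have hle : fk (κ + 1) (m + 2) ≤ 2 * completions κ m m (κ + m + 1) (m + 1) := by
    rw [← Nat.cast_le (α := ℕ∞), Nat.cast_mul, Nat.cast_two, ← hcount, cast_fk]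
    have hIco : ((m + 2 : ℕ) : ℤ) = N + 1 := by rw [hN]; push_cast; ring
    rw [hIco]
    refine Set.encard_le_encard fun l ⟨hperm, hconvex⟩ ↦ ⟨hperm, ?_⟩
    have hmem {x : ℤ} : x ∈ l ↔ 0 ≤ x ∧ x < N + 1 := by simp [hperm.mem_iff]
    exact_mod_cast hconvex.extend_both_sides (by positivity)
      (List.ne_nil_of_mem (hmem.2 ⟨le_rfl, by omega⟩))
      fun x hx ↦ ⟨(hmem.1 hx).1, by have := (hmem.1 hx).2; omega⟩
  grw [hle, completions_le_freeCompletions]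

theorem fk_le_two_mul_freeCompletions (hκ : κ ≤ 1) (n : ℕ) :
    fk (κ + 1) n ≤ 2 * freeCompletions κ n := by
  rcases lt_or_ge n 2 with hn | hn
  · have hfree : 0 < freeCompletions κ n := completions_pos ..
    have : Subsingleton (Fin n) := Fin.subsingleton_iff_le_one.2 (by omega)
    have hfk : fk (κ + 1) n ≤ 1 := Finite.card_le_one_iff_subsingleton.2 inferInstance
    omega
  · obtain ⟨m, rfl⟩ := Nat.exists_eq_add_of_le' hn
    calc
      fk (κ + 1) (m + 2) ≤ 2 * freeCompletions κ m := fk_add_two_le hκ m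
      _ ≤ 2 * freeCompletions κ (m + 2) := Nat.mul_le_mul_left 2
        ((completions_le_succ ..).trans (completions_le_succ ..))

end FkBounds

/-- for `k ∈ {1, 2}`, the limit `C_k = lim_{n→∞} f_k(n)^(1/n)` exists
(as a finite real number), and `f_k(n) = Θ(C_kⁿ)`: there are positive constants
`c₁, c₂` with `c₁ · C_kⁿ ≤ f_k(n) ≤ c₂ · C_kⁿ` for all `n ≥ 1`. -/
theorem kconvex_growth_rate (k : ℕ) (hk : k = 1 ∨ k = 2) :
    ∃ C : ℝ,
      Tendsto (fun n : ℕ => (fk k n : ℝ) ^ (1 / (n : ℝ))) atTop (nhds C) ∧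
      ∃ c₁ c₂ : ℝ, 0 < c₁ ∧ 0 < c₂ ∧
        ∀ n : ℕ, 1 ≤ n →
          c₁ * C ^ n ≤ (fk k n : ℝ) ∧ (fk k n : ℝ) ≤ c₂ * C ^ n := by
  obtain ⟨κ, hκ, rfl⟩ : ∃ κ ≤ 1, k = κ + 1 := ⟨k - 1, by omega, by omega⟩
  obtain ⟨C, hC, hfree⟩ := exists_pow_bounds_freeCompletions hκ
  have hbounds (n : ℕ) (hn : 1 ≤ n) :
      (1 / 6160 : ℝ) * C ^ n ≤ fk (κ + 1) n ∧ (fk (κ + 1) n : ℝ) ≤ 6160 * C ^ n := by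
    obtain ⟨hlower, hupper⟩ := hfree n
    have hle_fk : (freeCompletions κ n : ℝ) ≤ 6160 * fk (κ + 1) n := by
      exact_mod_cast freeCompletions_le_mul_fk hκ hn
    have hfk_le : (fk (κ + 1) n : ℝ) ≤ 2 * freeCompletions κ n := by
      exact_mod_cast fk_le_two_mul_freeCompletions hκ n
    constructor <;> linarith
  refine ⟨C, ?_, 1 / 6160, 6160, by norm_num, by norm_num, hbounds⟩
  exact tendsto_rpow_one_div_of_pow_bounds (c₁ := 1 / 6160) (c₂ := 6160) (by norm_num)
    (by norm_num) hC.le ((eventually_ge_atTop 1).mono hbounds)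
end
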